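/- arXiv:2110.01087 — 4 statements merged into one kernel-verified Lean document; each statement's English description precedes it below -/
import Mathlib

section
/- If T is a finite tree (a connected acyclic simple graph) of order n ≥ 1, then the burning number of T satisfies b(T) ≤ ⌈(√(12n + 64) + 8)/3⌉. -/
/-- The burning number of a finite simple graph `G`: the least positive integer `k`
for which there exist sources `x 0, x 1, …, x (k-1)` (indexed by `Fin k`, the `i`-th
source burning a ball of radius `k - 1 - i`) such that every vertex `v` satisfies
`dist (x i) v ≤ k - 1 - i` for some `i`. -/
noncomputable def burningNumber {V : Type*} [Fintype V] (G : SimpleGraph V) : ℕ :=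
  sInf {k : ℕ | 0 < k ∧ ∃ x : Fin k → V, ∀ v : V, ∃ i : Fin k,
    G.dist (x i) v ≤ k - 1 - (i : ℕ)}

/-!
Burn a rooted tree from its deep end. Let `p` be the largest of the `m` distinct radii available,
and `w` a vertex furthest from the root whose branch does not fit in a ball of radius `p`; the
branch at each child of `w` does. If some child has a branch with at least `p + m / 2` vertices, we
spend `p` on it. Otherwise, a ball of radius `p` centred on a longest path below `w` swallows the
branch at one child and reaches over `w` into the branch at a second one, where all that it misses
lies in a ball of smaller radius `q`. Choosing `q` minimal, the two branches together have at least
`p + q + m` vertices, as otherwise the distinct radii would be too few. In both cases the induction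
runs on the inequality `4 |S| ≤ 4 ∑ r + m (m + 1)`, which for the radii `0, …, k - 1` reads
`4 |S| + k ≤ 3 k²`.
-/

open scoped Finset

section Between

variable {V : Type*} {G : SimpleGraph V} {a b u v w x y z : V}

/-- The vertex `u` lies on a geodesic from `a` to `b`. In a tree with root `a` this says that `u` is
an ancestor of `b`, possibly `b` itself. The definition is meant for connected graphs, as `dist` is
`0` between different components. -/
abbrev IsBetween (G : SimpleGraph V) (a u b : V) : Prop :=
  G.dist a u + G.dist u b = G.dist a b

namespace IsBetween

theorem left (G : SimpleGraph V) (a b : V) : IsBetween G a a b := by simp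

theorem trans_left (hG : G.Connected) (h₁ : IsBetween G w y z) (h₂ : IsBetween G w x y) :
    IsBetween G w x z := by
  have := hG.dist_triangle (u := w) (v := x) (w := z)
  have := hG.dist_triangle (u := x) (v := y) (w := z)
  omega

theorem trans_left_right (hG : G.Connected) (h₁ : IsBetween G w y z) (h₂ : IsBetween G w x y) :
    IsBetween G x y z := by
  have := h₁.trans_left hG h₂
  omega

theorem trans_right (hG : G.Connected) (h₁ : IsBetween G w x z) (h₂ : IsBetween G x y z) :
    IsBetween G w y z := by
  have := hG.dist_triangle (u := w) (v := y) (w := z)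
  have := hG.dist_triangle (u := w) (v := x) (w := y)
  omega

theorem trans_right_left (hG : G.Connected) (h₁ : IsBetween G w x z) (h₂ : IsBetween G x y z) :
    IsBetween G w x y := by
  have := h₁.trans_right hG h₂
  omega

end IsBetween

theorem exists_isBetween_dist_eq (hG : G.Connected) {i : ℕ} (hi : i ≤ G.dist a b) :
    ∃ u, IsBetween G a u b ∧ G.dist a u = i := by
  obtain ⟨p, hp⟩ := hG.exists_walk_length_eq_dist a b
  have h_take := SimpleGraph.dist_le (p.take i)
  have h_drop := SimpleGraph.dist_le (p.drop i)
  have h_tri := hG.dist_triangle (u := a) (v := p.getVert i) (w := b)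
  rw [SimpleGraph.Walk.take_length] at h_take
  rw [SimpleGraph.Walk.drop_length] at h_drop
  exact ⟨p.getVert i, by omega, by omega⟩

theorem isBetween_of_mem_support (hG : G.Connected) {p : G.Walk a b} (hp : p.length = G.dist a b)
    (hu : u ∈ p.support) : IsBetween G a u b := by
  obtain ⟨q, r, rfl⟩ := p.mem_support_iff_exists_append.1 hu
  have := SimpleGraph.dist_le q
  have := SimpleGraph.dist_le r
  have := hG.dist_triangle (u := a) (v := u) (w := b)
  rw [SimpleGraph.Walk.length_append] at hp
  omega

theorem isBetween_or_isBetween (hG : G.IsTree) (h : IsBetween G a v b) (y : V) :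
    IsBetween G a v y ∨ IsBetween G y v b := by
  classical
  obtain ⟨p, hp⟩ := hG.connected.exists_walk_length_eq_dist a y
  obtain ⟨q, hq⟩ := hG.connected.exists_walk_length_eq_dist y b
  obtain ⟨s, hs⟩ := hG.connected.exists_walk_length_eq_dist a v
  obtain ⟨t, ht⟩ := hG.connected.exists_walk_length_eq_dist v b
  have h_path : (s.append t).IsPath :=
    (s.append t).isPath_of_length_eq_dist (by rw [SimpleGraph.Walk.length_append]; omega)
  have h_bypass : (p.append q).bypass = s.append t :=
    congrArg Subtype.val
      ((hG.isAcyclic.subsingleton_path a b).elim ⟨_, (p.append q).bypass_isPath⟩ ⟨_, h_path⟩)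
  have hv : v ∈ (p.append q).support :=
    (p.append q).support_bypass_subset_support (by simp [h_bypass])
  exact ((SimpleGraph.Walk.mem_support_append_iff p q).1 hv).imp
    (isBetween_of_mem_support hG.connected hp) (isBetween_of_mem_support hG.connected hq)

theorem IsBetween.of_dist_le (hG : G.IsTree) (hu : IsBetween G a u b) (hv : IsBetween G a v b)
    (h : G.dist a u ≤ G.dist a v) : IsBetween G a u v := by
  rcases isBetween_or_isBetween hG hu v with h' | h'
  · exact h'
  · have := G.dist_comm (u := u) (v := v)
    omega

/-- The set `A` is contained in a ball of radius `p`, whose center need not lie in `A`. -/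
def FitsInBall (G : SimpleGraph V) (A : Finset V) (p : ℕ) : Prop :=
  ∃ x, ∀ z ∈ A, G.dist x z ≤ p

theorem nonempty_of_not_fitsInBall [Nonempty V] {A : Finset V} {p : ℕ} (h : ¬FitsInBall G A p) :
    A.Nonempty := by
  contrapose! h
  exact ⟨Classical.arbitrary V, by simp [h]⟩

theorem FitsInBall.dist_le_of_isBetween (hG : G.IsTree) {A : Finset V} {c l : V} {p : ℕ}
    (hA : FitsInBall G A p) (hl : l ∈ A) (hl_max : ∀ z ∈ A, G.dist c z ≤ G.dist c l)
    (hv : IsBetween G c v l) (hvl : G.dist v l = p) : ∀ z ∈ A, G.dist v z ≤ p := by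
  intro z hz
  rcases isBetween_or_isBetween hG hv z with h | h
  · have := hl_max z hz
    omega
  · obtain ⟨x, hx⟩ := hA
    have h_diam : G.dist z l ≤ p + p :=
      hG.connected.dist_triangle.trans
        (add_le_add (G.dist_comm.trans_le (hx z hz)) (hx l hl))
    have := G.dist_comm (u := v) (v := z)
    omega

end Between

section AncestorClosed

variable {V : Type*} {G : SimpleGraph V} {ρ c w y : V} {S A : Finset V}

/-- In a tree with root `ρ`, the set `S` contains all ancestors of its elements, i.e. it is empty or
a subtree through `ρ`. -/
def IsAncestorClosed (G : SimpleGraph V) (ρ : V) (S : Finset V) : Prop :=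
  ∀ v ∈ S, ∀ a, IsBetween G ρ a v → a ∈ S

/-- The part of `S` below `c` (including `c`) in a tree with root `ρ`. -/
noncomputable def branch (G : SimpleGraph V) (ρ : V) (S : Finset V) (c : V) : Finset V :=
  {v ∈ S | IsBetween G ρ c v}

/-- In a tree with root `ρ`, the vertex `c` is a child of `w`. -/
def IsChild (G : SimpleGraph V) (ρ w c : V) : Prop :=
  IsBetween G ρ w c ∧ G.dist w c = 1

theorem mem_branch {v : V} : v ∈ branch G ρ S c ↔ v ∈ S ∧ IsBetween G ρ c v := by
  simp [branch]

theorem branch_subset : branch G ρ S c ⊆ S := Finset.filter_subset _ _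

theorem isAncestorClosed_branch (hG : G.Connected) (hS : IsAncestorClosed G ρ S) (c : V) :
    IsAncestorClosed G c (branch G ρ S c) := by
  intro v hv a ha
  obtain ⟨hvS, hcv⟩ := mem_branch.1 hv
  exact mem_branch.2 ⟨hS v hvS a (hcv.trans_right hG ha), hcv.trans_right_left hG ha⟩

theorem IsAncestorClosed.sdiff_branch [DecidableEq V] (hG : G.Connected)
    (hS : IsAncestorClosed G ρ S) (c : V) : IsAncestorClosed G ρ (S \ branch G ρ S c) := by
  intro v hv a ha
  obtain ⟨hvS, hvc⟩ := Finset.mem_sdiff.1 hv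
  exact Finset.mem_sdiff.2 ⟨hS v hvS a ha, fun hac =>
    hvc (mem_branch.2 ⟨hvS, ha.trans_left hG (mem_branch.1 hac).2⟩)⟩

theorem IsAncestorClosed.inter [DecidableEq V] (hS : IsAncestorClosed G ρ S)
    (hA : IsAncestorClosed G ρ A) : IsAncestorClosed G ρ (S ∩ A) := fun v hv a ha =>
  Finset.mem_inter.2
    ⟨hS v (Finset.mem_of_mem_inter_left hv) a ha, hA v (Finset.mem_of_mem_inter_right hv) a ha⟩

theorem dist_lt_card_filter_isBetween (hG : G.Connected) {a b : V}
    (h : ∀ u, IsBetween G a u b → u ∈ S) : G.dist a b < #{u ∈ S | IsBetween G a u b} := by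
  have h_card : #(.range (G.dist a b + 1)) ≤ #{u ∈ S | IsBetween G a u b} := by
    refine Finset.card_le_card_of_surjOn (G.dist a) fun i hi => ?_
    obtain ⟨u, hu, rfl⟩ := exists_isBetween_dist_eq hG
      (Finset.mem_range_succ_iff.1 (Finset.mem_coe.1 hi))
    exact ⟨u, by simpa using ⟨h u hu, hu⟩, rfl⟩
  rwa [Finset.card_range] at h_card

theorem IsAncestorClosed.dist_lt_card (hG : G.Connected) (hA : IsAncestorClosed G c A)
    (hy : y ∈ A) : G.dist c y < #A :=
  (dist_lt_card_filter_isBetween hG (hA y hy)).trans_le (Finset.card_filter_le _ _)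

-- `a` is the deepest common ancestor of `y` and `z`.
theorem IsAncestorClosed.exists_dist_add_dist_lt_card (hG : G.Connected)
    (hA : IsAncestorClosed G c A) {z : V} (hy : y ∈ A) (hz : z ∈ A) :
    ∃ a, IsBetween G c a y ∧ IsBetween G c a z ∧ G.dist c y + G.dist a z < #A := by
  classical
  obtain ⟨a, ha, ha_max⟩ := Finset.exists_max_image
    {u ∈ A | IsBetween G c u y ∧ IsBetween G c u z} (G.dist c)
    ⟨c, by simpa using hA y hy c (.left G c y)⟩
  simp only [Finset.mem_filter] at ha ha_max
  obtain ⟨-, hay, haz⟩ := ha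
  have h_cy := dist_lt_card_filter_isBetween hG (hA y hy)
  have h_az := dist_lt_card_filter_isBetween hG
    fun u hu => hA z hz u (haz.trans_right hG hu)
  have h_disj : Disjoint {u ∈ A | IsBetween G c u y} ({u ∈ A | IsBetween G a u z}.erase a) := by
    simp only [Finset.disjoint_left, Finset.mem_erase, Finset.mem_filter]
    rintro u ⟨huA, huy⟩ ⟨hua, -, huz⟩
    have h_le := ha_max u ⟨huA, huy, haz.trans_right hG huz⟩
    have h_between := haz.trans_right_left hG huz
    exact hua (hG.dist_eq_zero_iff.1 (by omega : G.dist a u = 0)).symm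
  have h_card := Finset.card_le_card (Finset.union_subset
    (Finset.filter_subset (IsBetween G c · y) A)
    ((Finset.erase_subset a _).trans (Finset.filter_subset (IsBetween G a · z) A)))
  have := Finset.pred_card_le_card_erase (a := a) (s := {u ∈ A | IsBetween G a u z})
  rw [Finset.card_union_of_disjoint h_disj] at h_card
  exact ⟨a, hay, haz, by omega⟩

theorem IsAncestorClosed.exists_dist_le_or_dist_add_le_card (hG : G.IsTree)
    (hA : IsAncestorClosed G c A) (q : ℕ) :
    ∃ x, ∀ z ∈ A, G.dist x z ≤ q ∨ G.dist c z + q + 2 ≤ #A := by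
  rcases A.eq_empty_or_nonempty with rfl | hA_ne
  · exact ⟨c, by simp⟩
  obtain ⟨y, hy, hy_max⟩ := A.exists_max_image (G.dist c) hA_ne
  obtain ⟨x, hxy, hx⟩ := exists_isBetween_dist_eq hG.connected (Nat.sub_le (G.dist c y) q)
  refine ⟨x, fun z hz => ?_⟩
  have hz_le := hy_max z hz
  obtain ⟨a, hay, haz, h_card⟩ := hA.exists_dist_add_dist_lt_card hG.connected hy hz
  rcases le_or_gt (G.dist c x) (G.dist c a) with h | h
  · have hxz := haz.trans_left hG.connected (hxy.of_dist_le hG hay h)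
    exact Or.inl (by omega)
  · exact Or.inr (by omega)

theorem IsAncestorClosed.mem_of_branch_nonempty (hS : IsAncestorClosed G ρ S)
    (h : (branch G ρ S c).Nonempty) : c ∈ S := by
  obtain ⟨v, hv⟩ := h
  exact hS v (mem_branch.1 hv).1 c (mem_branch.1 hv).2

namespace IsChild

theorem branch_subset_branch (hG : G.Connected) (h : IsChild G ρ w c) :
    branch G ρ S c ⊆ branch G ρ S w := fun _ hz =>
  mem_branch.2 ⟨(mem_branch.1 hz).1, (mem_branch.1 hz).2.trans_left hG h.1⟩

theorem dist_eq_dist_add_one (hG : G.Connected) (h : IsChild G ρ w c) {z : V}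
    (hz : z ∈ branch G ρ S c) : G.dist w z = G.dist c z + 1 := by
  rw [← (mem_branch.1 hz).2.trans_left_right hG h.1, h.2, add_comm]

theorem disjoint_branch (hG : G.IsTree) {c₁ c₂ : V} (h₁ : IsChild G ρ w c₁)
    (h₂ : IsChild G ρ w c₂) (hne : c₁ ≠ c₂) :
    Disjoint (branch G ρ S c₁) (branch G ρ S c₂) := by
  rw [Finset.disjoint_left]
  intro z hz₁ hz₂
  have h_depth : G.dist ρ c₁ = G.dist ρ c₂ := by
    rw [← h₁.1, ← h₂.1, h₁.2, h₂.2]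
  have := (mem_branch.1 hz₁).2.of_dist_le hG (mem_branch.1 hz₂).2 h_depth.le
  exact hne (hG.connected.dist_eq_zero_iff.1 (by omega))

end IsChild

theorem exists_isChild_mem_branch (hG : G.Connected) (hy : y ∈ branch G ρ S w) (hwy : w ≠ y) :
    ∃ c, IsChild G ρ w c ∧ y ∈ branch G ρ S c := by
  obtain ⟨hyS, hρwy⟩ := mem_branch.1 hy
  obtain ⟨c, hcy, hc⟩ := exists_isBetween_dist_eq hG (hG.pos_dist_of_ne hwy : 1 ≤ _)
  exact ⟨c, ⟨hρwy.trans_right_left hG hcy, hc⟩,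
    mem_branch.2 ⟨hyS, hρwy.trans_right hG hcy⟩⟩

theorem exists_minimal_branch_not_fitsInBall (hG : G.Connected) (hS : IsAncestorClosed G ρ S)
    {p : ℕ} (h : ¬FitsInBall G S p) :
    ∃ w, ¬FitsInBall G (branch G ρ S w) p ∧
      ∀ c, IsChild G ρ w c → FitsInBall G (branch G ρ S c) p := by
  classical
  have := hG.nonempty
  have hρ : ρ ∈ S := (nonempty_of_not_fitsInBall h).elim fun v hv => hS v hv ρ (.left G ρ v)
  have hρ_branch : branch G ρ S ρ = S :=
    Finset.filter_true_of_mem fun v _ => IsBetween.left G ρ v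
  obtain ⟨w, hw, hw_max⟩ := Finset.exists_max_image
    {w ∈ S | ¬FitsInBall G (branch G ρ S w) p} (G.dist ρ)
    ⟨ρ, Finset.mem_filter.2 ⟨hρ, by rwa [hρ_branch]⟩⟩
  refine ⟨w, (Finset.mem_filter.1 hw).2, fun c hc => ?_⟩
  by_contra h_fit
  have hcS := hS.mem_of_branch_nonempty (nonempty_of_not_fitsInBall h_fit)
  have h_le := hw_max c (Finset.mem_filter.2 ⟨hcS, h_fit⟩)
  rw [← hc.1, hc.2] at h_le
  omega

theorem exists_ball_deepest_branch (hG : G.IsTree) (hS : IsAncestorClosed G ρ S) {p : ℕ}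
    (hw : ¬FitsInBall G (branch G ρ S w) p)
    (h_child : ∀ c, IsChild G ρ w c → FitsInBall G (branch G ρ S c) p) :
    ∃ c v, IsChild G ρ w c ∧ (∀ z ∈ branch G ρ S c, G.dist v z ≤ p) ∧
      G.dist v w + p ≤ #(branch G ρ S c) := by
  have := hG.connected.nonempty
  obtain ⟨l, hl, hl_max⟩ :=
    (branch G ρ S w).exists_max_image (G.dist w) (nonempty_of_not_fitsInBall hw)
  have h_deep : p < G.dist w l := by
    by_contra! h
    exact hw ⟨w, fun z hz => (hl_max z hz).trans h⟩
  obtain ⟨c, hc, hlc⟩ := exists_isChild_mem_branch hG.connected hl (by rintro rfl; simp at h_deep)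
  have h_wl := hc.dist_eq_dist_add_one hG.connected hlc
  have hcl_max : ∀ z ∈ branch G ρ S c, G.dist c z ≤ G.dist c l := fun z hz => by
    have h_wz := hc.dist_eq_dist_add_one hG.connected hz
    have := hl_max z (hc.branch_subset_branch hG.connected hz)
    omega
  obtain ⟨v, hvl, hv⟩ := exists_isBetween_dist_eq hG.connected (Nat.sub_le (G.dist c l) p)
  refine ⟨c, v, hc, (h_child c hc).dist_le_of_isBetween hG hlc hcl_max hvl (by omega), ?_⟩
  have h_card := (isAncestorClosed_branch hG.connected hS c).dist_lt_card hG.connected hlc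
  have h_tri := hG.connected.dist_triangle (u := w) (v := c) (w := v)
  rw [hc.2, G.dist_comm] at h_tri
  omega

theorem exists_pair_of_branches (hG : G.IsTree) (hS : IsAncestorClosed G ρ S) {p : ℕ}
    (hw : ¬FitsInBall G (branch G ρ S w) p)
    (h_child : ∀ c, IsChild G ρ w c → FitsInBall G (branch G ρ S c) p)
    (h_card : ∀ c, IsChild G ρ w c → #(branch G ρ S c) ≤ 2 * p) :
    ∃ c₁ c₂ v, IsChild G ρ w c₁ ∧ IsChild G ρ w c₂ ∧ c₁ ≠ c₂ ∧
      2 * p < #(branch G ρ S c₁) + #(branch G ρ S c₂) ∧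
      (∀ z ∈ branch G ρ S c₁, G.dist v z ≤ p) ∧
      ∀ q, #(branch G ρ S c₁) + #(branch G ρ S c₂) ≤ 2 * p + q + 1 →
        ∃ x, ∀ z ∈ branch G ρ S c₂, G.dist v z ≤ p ∨ G.dist x z ≤ q := by
  obtain ⟨c₁, v, hc₁, hv, hvw⟩ := exists_ball_deepest_branch hG hS hw h_child
  obtain ⟨y, hy, hvy⟩ : ∃ y ∈ branch G ρ S w, p < G.dist v y := by
    by_contra! h
    exact hw ⟨v, h⟩
  have hwy : w ≠ y := by
    rintro rfl
    have := h_card c₁ hc₁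
    omega
  obtain ⟨c₂, hc₂, hyc₂⟩ := exists_isChild_mem_branch hG.connected hy hwy
  have hne : c₁ ≠ c₂ := by
    rintro rfl
    exact (hv y hyc₂).not_gt hvy
  have h_dist : ∀ z ∈ branch G ρ S c₂, G.dist v z ≤ G.dist v w + (G.dist c₂ z + 1) := by
    intro z hz
    rw [← hc₂.dist_eq_dist_add_one hG.connected hz]
    exact hG.connected.dist_triangle
  have hA := isAncestorClosed_branch hG.connected hS c₂
  refine ⟨c₁, c₂, v, hc₁, hc₂, hne, ?_, hv, fun q hq => ?_⟩
  · have h_card₂ := hA.dist_lt_card hG.connected hyc₂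
    have := h_dist y hyc₂
    omega
  · obtain ⟨x, hx⟩ := hA.exists_dist_le_or_dist_add_le_card hG q
    refine ⟨x, fun z hz => (hx z hz).symm.imp_left fun h => ?_⟩
    have := h_dist z hz
    omega

end AncestorClosed

section Radii

variable {R : Finset ℕ} {p : ℕ}

theorem exists_mem_le_and_add_card_le (hR : ∀ r ∈ R, r < p) {M : ℕ} (hM : M < #R) :
    ∃ q ∈ R, M ≤ q ∧ q + #R ≤ M + p := by
  have h_ne : {r ∈ R | M ≤ r}.Nonempty := by
    obtain ⟨q, hq, hqM⟩ := Finset.exists_mem_notMem_of_card_lt_card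
      ((Finset.card_range M).trans_lt hM)
    exact ⟨q, Finset.mem_filter.2 ⟨hq, not_lt.1 (mt Finset.mem_range.2 hqM)⟩⟩
  obtain ⟨q, hq, hq_min⟩ := Finset.exists_min_image _ id h_ne
  obtain ⟨hqR, hMq⟩ := Finset.mem_filter.1 hq
  have h_sub : R ⊆ .range M ∪ .Ico q p := by
    intro r hr
    rw [Finset.mem_union, Finset.mem_range, Finset.mem_Ico]
    exact (lt_or_ge r M).imp_right fun h => ⟨hq_min r (Finset.mem_filter.2 ⟨hr, h⟩), hR r hr⟩
  have h_card := (Finset.card_le_card h_sub).trans (Finset.card_union_le _ _)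
  rw [Finset.card_range, Nat.card_Ico] at h_card
  have := hR q hqR
  exact ⟨q, hqR, hMq, by omega⟩

/-- Four times the number of vertices of a tree that balls with radii the elements of `R` are shown
to cover; the factor `4` keeps everything in `ℕ`. -/
def budget (R : Finset ℕ) : ℕ := 4 * ∑ r ∈ R, r + #R * (#R + 1)

theorem budget_erase (hp : p ∈ R) : budget (R.erase p) + (4 * p + 2 * #R) = budget R := by
  rw [budget, budget, ← Finset.add_sum_erase R (fun r => r) hp, ← Finset.card_erase_add_one hp]
  ring

theorem budget_range (k : ℕ) : budget (.range k) + k = 3 * k ^ 2 := by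
  induction k with
  | zero => rfl
  | succ k ih =>
    simp only [budget, Finset.sum_range_succ, Finset.card_range] at ih ⊢
    linarith

end Radii

section BallCover

variable {V : Type*} {G : SimpleGraph V} {ρ w : V} {S S' : Finset V} {R : Finset ℕ} {p : ℕ}

/-- The set `S` is covered by balls, one of each radius `r ∈ R`. The center of the ball of radius
`r` is `x r`; the values of `x` outside `R` are irrelevant. -/
def IsBallCoverable (G : SimpleGraph V) (S : Finset V) (R : Finset ℕ) : Prop :=
  ∃ x : ℕ → V, ∀ v ∈ S, ∃ r ∈ R, G.dist (x r) v ≤ r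

theorem FitsInBall.isBallCoverable (h : FitsInBall G S p) (hp : p ∈ R) : IsBallCoverable G S R :=
  h.imp' (fun x _ => x) fun _ hx v hv => ⟨p, hp, hx v hv⟩

theorem IsBallCoverable.of_erase (h : IsBallCoverable G S' (R.erase p)) (hp : p ∈ R) {c : V}
    (hc : ∀ v ∈ S, G.dist c v ≤ p ∨ v ∈ S') : IsBallCoverable G S R := by
  obtain ⟨x, hx⟩ := h
  refine ⟨Function.update x p c, fun v hv => ?_⟩
  rcases hc v hv with hcv | hv'
  · exact ⟨p, hp, by rwa [Function.update_self]⟩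
  · obtain ⟨r, hr, hxr⟩ := hx v hv'
    obtain ⟨hrp, hrR⟩ := Finset.mem_erase.1 hr
    exact ⟨r, hrR, by rwa [Function.update_of_ne hrp]⟩

theorem IsBallCoverable.mono_graph {G' : SimpleGraph V} (hG : G.Connected) (hle : G ≤ G')
    (h : IsBallCoverable G S R) : IsBallCoverable G' S R :=
  h.imp fun x hx v hv => (hx v hv).imp fun r hr =>
    ⟨hr.1, ((hG (x r) v).dist_anti hle).trans hr.2⟩

theorem isBallCoverable_of_large_branch (hG : G.Connected) (hS : IsAncestorClosed G ρ S)
    (hp : p ∈ R) (h_budget : 4 * #S ≤ budget R)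
    (ih : ∀ R' ⊂ R, ∀ S', IsAncestorClosed G ρ S' → 4 * #S' ≤ budget R' → IsBallCoverable G S' R')
    {c : V} (hc : FitsInBall G (branch G ρ S c) p)
    (h_large : 2 * p + #R ≤ 2 * #(branch G ρ S c)) : IsBallCoverable G S R := by
  classical
  obtain ⟨x, hx⟩ := hc
  have h_card : #(S \ branch G ρ S c) + #(branch G ρ S c) = #S :=
    Finset.card_sdiff_add_card_eq_card branch_subset
  have h_erase := budget_erase hp
  have h_rest := ih (R.erase p) (Finset.erase_ssubset hp) _ (hS.sdiff_branch hG c)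
    (by omega)
  refine h_rest.of_erase hp (c := x) fun v hv => ?_
  by_cases hvc : v ∈ branch G ρ S c
  · exact .inl (hx v hvc)
  · exact .inr (Finset.mem_sdiff.2 ⟨hv, hvc⟩)

theorem isBallCoverable_of_pair_of_branches (hG : G.Connected) (hS : IsAncestorClosed G ρ S)
    (hp : p ∈ R) (h_budget : 4 * #S ≤ budget R)
    (ih : ∀ R' ⊂ R, ∀ S', IsAncestorClosed G ρ S' → 4 * #S' ≤ budget R' → IsBallCoverable G S' R')
    {c₁ c₂ v x : V} {q : ℕ} (hq : q ∈ R.erase p)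
    (h_disj : Disjoint (branch G ρ S c₁) (branch G ρ S c₂))
    (hv : ∀ z ∈ branch G ρ S c₁, G.dist v z ≤ p)
    (hx : ∀ z ∈ branch G ρ S c₂, G.dist v z ≤ p ∨ G.dist x z ≤ q)
    (h_large : p + q + #R ≤ #(branch G ρ S c₁) + #(branch G ρ S c₂)) :
    IsBallCoverable G S R := by
  classical
  have h_card : #(S \ (branch G ρ S c₁ ∪ branch G ρ S c₂)) +
      (#(branch G ρ S c₁) + #(branch G ρ S c₂)) = #S := by
    rw [← Finset.card_union_of_disjoint h_disj]
    exact Finset.card_sdiff_add_card_eq_card (Finset.union_subset branch_subset branch_subset)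
  have h_closed : IsAncestorClosed G ρ (S \ (branch G ρ S c₁ ∪ branch G ρ S c₂)) := by
    rw [Finset.sdiff_union_distrib]
    exact (hS.sdiff_branch hG c₁).inter (hS.sdiff_branch hG c₂)
  have h_erase_p := budget_erase hp
  have h_erase_q := budget_erase hq
  have h_card_erase := Finset.card_erase_add_one hp
  have h_rest := ih ((R.erase p).erase q)
    ((Finset.erase_ssubset hq).trans (Finset.erase_ssubset hp)) _ h_closed (by omega)
  have h_outside : IsBallCoverable G {z ∈ S | p < G.dist v z} (R.erase p) := by
    refine h_rest.of_erase hq (c := x) fun z hz => ?_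
    obtain ⟨hzS, hvz⟩ := Finset.mem_filter.1 hz
    by_cases hz₂ : z ∈ branch G ρ S c₂
    · exact .inl ((hx z hz₂).resolve_left hvz.not_ge)
    · have hz₁ : z ∉ branch G ρ S c₁ := fun h => hvz.not_ge (hv z h)
      exact .inr (by simp [hzS, hz₁, hz₂])
  exact h_outside.of_erase hp (c := v) fun z hz =>
    (le_or_gt _ p).imp_right fun h => Finset.mem_filter.2 ⟨hz, h⟩

theorem isBallCoverable_of_small_branches (hG : G.IsTree) (hS : IsAncestorClosed G ρ S)
    (hp : p ∈ R) (h_budget : 4 * #S ≤ budget R)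
    (ih : ∀ R' ⊂ R, ∀ S', IsAncestorClosed G ρ S' → 4 * #S' ≤ budget R' → IsBallCoverable G S' R')
    (hp_max : ∀ r ∈ R, r ≤ p)
    (hw : ¬FitsInBall G (branch G ρ S w) p)
    (h_child : ∀ c, IsChild G ρ w c → FitsInBall G (branch G ρ S c) p)
    (h_small : ∀ c, IsChild G ρ w c → 2 * #(branch G ρ S c) < 2 * p + #R) :
    IsBallCoverable G S R := by
  have h_card_R : #R ≤ p + 1 :=
    (Finset.card_le_card fun r hr => Finset.mem_range_succ_iff.2 (hp_max r hr)).trans_eq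
      (Finset.card_range _)
  obtain ⟨c₁, c₂, v, hc₁, hc₂, hne, h_lower, hv, h_second⟩ :=
    exists_pair_of_branches hG hS hw h_child fun c hc => by
      have := h_small c hc
      omega
  have h_small₁ := h_small c₁ hc₁
  have h_small₂ := h_small c₂ hc₂
  have h_card_erase := Finset.card_erase_add_one hp
  obtain ⟨q, hq, hq_lower, hq_upper⟩ := exists_mem_le_and_add_card_le (R := R.erase p) (p := p)
    (M := #(branch G ρ S c₁) + #(branch G ρ S c₂) - (2 * p + 1))
    (fun r hr => (hp_max r (Finset.mem_of_mem_erase hr)).lt_of_ne (Finset.ne_of_mem_erase hr))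
    (by omega)
  obtain ⟨x, hx⟩ := h_second q (by omega)
  exact isBallCoverable_of_pair_of_branches hG.connected hS hp h_budget ih hq
    (hc₁.disjoint_branch hG hc₂ hne) hv hx (by omega)

theorem IsAncestorClosed.isBallCoverable (hG : G.IsTree) (hS : IsAncestorClosed G ρ S)
    (h_budget : 4 * #S ≤ budget R) : IsBallCoverable G S R := by
  induction R using Finset.strongInduction generalizing S with
  | H R ih =>
  replace ih : ∀ R' ⊂ R, ∀ S', IsAncestorClosed G ρ S' → 4 * #S' ≤ budget R' →
      IsBallCoverable G S' R' := fun R' hR' S' => ih R' hR'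
  rcases R.eq_empty_or_nonempty with rfl | hR
  · have hS_empty : S = ∅ := by simpa [budget] using h_budget
    exact ⟨fun _ => ρ, by simp [hS_empty]⟩
  obtain ⟨p, hp, hp_max⟩ := R.exists_max_image id hR
  by_cases h_fit : FitsInBall G S p
  · exact h_fit.isBallCoverable hp
  obtain ⟨w, hw, h_child⟩ := exists_minimal_branch_not_fitsInBall hG.connected hS h_fit
  by_cases h_large : ∃ c, IsChild G ρ w c ∧ 2 * p + #R ≤ 2 * #(branch G ρ S c)
  · obtain ⟨c, hc, h_card⟩ := h_large
    exact isBallCoverable_of_large_branch hG.connected hS hp h_budget ih (h_child c hc) h_card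
  · push Not at h_large
    exact isBallCoverable_of_small_branches hG hS hp h_budget ih hp_max hw h_child h_large

end BallCover

section BurningNumber

variable {V : Type*} [Fintype V] {G : SimpleGraph V} {k : ℕ}

theorem burningNumber_le_of_isBallCoverable (hk : 0 < k)
    (h : IsBallCoverable G .univ (.range k)) : burningNumber G ≤ k := by
  obtain ⟨x, hx⟩ := h
  refine Nat.sInf_le ⟨hk, fun i => x (k - 1 - i), fun v => ?_⟩
  obtain ⟨r, hr, hd⟩ := hx v (Finset.mem_univ v)
  have hrk := Finset.mem_range.1 hr
  have h_reflect : k - 1 - (k - 1 - r) = r := by omega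
  exact ⟨⟨k - 1 - r, by omega⟩, by simpa only [h_reflect] using hd⟩

theorem burningNumber_le_of_card_le (hG : G.Connected)
    (h : 4 * Fintype.card V + k ≤ 3 * k ^ 2) : burningNumber G ≤ k := by
  obtain ⟨ρ⟩ := hG.nonempty
  obtain ⟨T, hTG, hT⟩ := hG.exists_isTree_le
  have h_card : 0 < Fintype.card V := Fintype.card_pos_iff.2 ⟨ρ⟩
  have hk : 0 < k := Nat.pos_of_ne_zero (by rintro rfl; omega)
  have h_closed : IsAncestorClosed T ρ .univ := fun _ _ a _ => Finset.mem_univ a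
  have h_budget : 4 * #(Finset.univ : Finset V) ≤ budget (.range k) := by
    have := budget_range k
    rw [Finset.card_univ]
    omega
  exact burningNumber_le_of_isBallCoverable hk
    ((h_closed.isBallCoverable hT h_budget).mono_graph hT.connected hTG)

end BurningNumber

theorem sqrt_add_one_div_le {t : ℝ} (ht : 0 ≤ t) :
    (Real.sqrt (48 * t + 1) + 1) / 6 ≤ (Real.sqrt (12 * t + 64) + 8) / 3 := by
  have h_sqrt : Real.sqrt (48 * t + 1) ≤ 2 * Real.sqrt (12 * t + 64) := by
    rw [Real.sqrt_le_left (by positivity), mul_pow, Real.sq_sqrt (by positivity)]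
    linarith
  linarith

theorem burningNumber_tree_le_general {V : Type*} [Fintype V] {G : SimpleGraph V}
    (hG : G.Connected) :
    burningNumber G ≤ ⌈(Real.sqrt (48 * (Fintype.card V : ℝ) + 1) + 1) / 6⌉₊ := by
  refine burningNumber_le_of_card_le hG ?_
  set n := Fintype.card V
  set k := ⌈(Real.sqrt (48 * (n : ℝ) + 1) + 1) / 6⌉₊
  have hk : (Real.sqrt (48 * (n : ℝ) + 1) + 1) / 6 ≤ k := Nat.le_ceil _
  have h_sq : 48 * (n : ℝ) + 1 ≤ (6 * k - 1) ^ 2 :=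
    (Real.sqrt_le_left (by linarith [Real.sqrt_nonneg (48 * (n : ℝ) + 1)])).1 (by linarith)
  have h_quadratic : 4 * (n : ℝ) + k ≤ 3 * k ^ 2 := by linarith
  exact_mod_cast h_quadratic

/-- **Theorem (Bonato–Kamali).** If `T` is a tree of order `n ≥ 1`, then
`b(T) ≤ ⌈(√(12n + 64) + 8)/3⌉`. -/
theorem burningNumber_tree_le {V : Type*} [Fintype V] (T : SimpleGraph V)
    (hT : T.IsTree) (n : ℕ) (hn : n = Fintype.card V) (hn1 : 1 ≤ n) :
    burningNumber T ≤ ⌈(Real.sqrt (12 * (n : ℝ) + 64) + 8) / 3⌉₊ := by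
  subst hn
  exact (burningNumber_tree_le_general hT.connected).trans
    (Nat.ceil_mono (sqrt_add_one_div_le (Nat.cast_nonneg _)))
end

section
/- Let T be a finite tree rooted at an arbitrary vertex, let j be a positive integer, and let R = {r_1 < r_2 < … < r_j} be a set of j distinct non-negative integers. Suppose some vertex of T has depth at least r_j (depth measured as distance to the root). Then there exist r* ∈ R and a vertex p of T such that the subtree T_p consisting of p and all its descendants has radius at most r* (radius taken in the subgraph induced on T_p) and has order at least r* + ⌊j/2⌋ − 3. -/
/-- In a tree `T` rooted at `w`, the set consisting of `p` together with all of its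
descendants: the vertices `q` such that `p` lies on the unique path from `q` to the
root `w`, equivalently `dist w q = dist w p + dist p q`. -/
def descSet {V : Type*} (T : SimpleGraph V) (w p : V) : Set V :=
  {q | T.dist w q = T.dist w p + T.dist p q}

/-!
Follow a longest path from the root and let `n h` be the order of the subtree hanging at its vertex
of height `h`, so that `n` is positive and strictly increasing. That subtree has radius at most `s`
if `h ≤ s`, and also if `n h ≤ 2 * s + 1`: the vertex of height `s` is then a center, because its
own subtree uses up `s + 1` vertices and leaves at most `s` for a path leaving it. Suppose that no
such subtree has order at least `s + k` with `s ∈ R`, where `k = ⌈|R| / 2⌉`, and put `M = max R` and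
`N = n M`, so that `M < N < M + k`. If `s + k ≤ N`, then at the least height at which `n` reaches
`s + k` it jumps from at most `s + k - 1` to at least `2 * s + 2`, which forces
`s + M + 3 ≤ N + k`. The elements of `R` are thus either at most `N + k - M - 3` or at least
`N - k + 1`, so there are at most `2 * k - 2 < |R|` of them.
-/

section Geodesics

variable {V : Type*} {G : SimpleGraph V} {a b x : V}

theorem dist_eq_add_of_mem_support {q : G.Walk a b} (hq : q.length = G.dist a b)
    (hx : x ∈ q.support) : G.dist a b = G.dist a x + G.dist x b := by
  classical
  rw [← SimpleGraph.length_eq_dist_of_subwalk hq (q.isSubwalk_takeUntil hx),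
    ← SimpleGraph.length_eq_dist_of_subwalk hq (q.isSubwalk_dropUntil hx),
    ← SimpleGraph.Walk.length_append, q.take_spec, hq]

theorem dist_getVert_getVert {q : G.Walk a b} (hq : q.length = G.dist a b) {m n : ℕ}
    (hmn : m ≤ n) (hn : n ≤ q.length) : G.dist (q.getVert m) (q.getVert n) = n - m := by
  have hsub : ((q.drop m).take (n - m)).IsSubwalk q :=
    ((q.drop m).isSubwalk_take _).trans (q.isSubwalk_drop m)
  have hlen := SimpleGraph.length_eq_dist_of_subwalk hq hsub
  rw [SimpleGraph.Walk.take_length, SimpleGraph.Walk.drop_length,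
    SimpleGraph.Walk.drop_getVert, Nat.add_sub_cancel' hmn] at hlen
  omega

theorem mem_support_of_dist_eq_add (hG : G.IsTree) (h : G.dist a b = G.dist a x + G.dist x b)
    (q : G.Walk a b) : x ∈ q.support := by
  classical
  obtain ⟨s, hs⟩ := hG.connected.exists_walk_length_eq_dist a x
  obtain ⟨t, ht⟩ := hG.connected.exists_walk_length_eq_dist x b
  have hpath : (s.append t).IsPath :=
    (s.append t).isPath_of_length_eq_dist (by rw [SimpleGraph.Walk.length_append, hs, ht, h])
  have heq : s.append t = q.bypass :=
    congrArg Subtype.val ((hG.isAcyclic.subsingleton_path a b).elim ⟨_, hpath⟩ ⟨_, q.bypass_isPath⟩)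
  apply q.support_bypass_subset_support
  simp [← heq]

theorem dist_induce_le_of_convex (hG : G.Connected) {S : Set V}
    (hS : ∀ a ∈ S, ∀ b ∈ S, ∀ x, G.dist a b = G.dist a x + G.dist x b → x ∈ S) (a b : S) :
    (G.induce S).dist a b ≤ G.dist a b := by
  obtain ⟨q, hq⟩ := hG.exists_walk_length_eq_dist (a : V) b
  have hqS : ∀ x ∈ q.support, x ∈ S := fun x hx ↦
    hS a a.2 b b.2 x (dist_eq_add_of_mem_support hq hx)
  calc (G.induce S).dist a b ≤ (q.induce S hqS).length := SimpleGraph.dist_le _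
    _ = ((q.induce S hqS).map (SimpleGraph.Embedding.induce S).toHom).length :=
      (SimpleGraph.Walk.length_map _ _).symm
    _ = q.length := congrArg SimpleGraph.Walk.length (q.map_induce hqS)
    _ = G.dist a b := hq

end Geodesics

section Descendants

variable {V : Type*} {T : SimpleGraph V} {w p q c v x : V}

theorem self_mem_descSet : p ∈ descSet T w p := by
  simp [descSet]

theorem descSet_subset_descSet (hT : T.Connected) (hq : q ∈ descSet T w p) :
    descSet T w q ⊆ descSet T w p := by
  intro x hx
  have hwpx : T.dist w x ≤ T.dist w p + T.dist p x := hT.dist_triangle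
  have hpqx : T.dist p x ≤ T.dist p q + T.dist q x := hT.dist_triangle
  simp only [descSet, Set.mem_ofPred_eq] at *
  omega

theorem dist_eq_add_of_notMem_descSet (hT : T.IsTree) (hx : x ∈ descSet T w p)
    (hv : v ∉ descSet T w p) : T.dist v x = T.dist v p + T.dist p x := by
  obtain ⟨s, hs⟩ := hT.connected.exists_walk_length_eq_dist w v
  obtain ⟨t, ht⟩ := hT.connected.exists_walk_length_eq_dist v x
  have hp : p ∈ (s.append t).support := mem_support_of_dist_eq_add hT hx _
  rcases (SimpleGraph.Walk.mem_support_append_iff _ _).1 hp with hps | hpt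
  · exact absurd (dist_eq_add_of_mem_support hs hps) hv
  · exact dist_eq_add_of_mem_support ht hpt

theorem descSet_convex (hT : T.IsTree) {a b : V} (ha : a ∈ descSet T w p)
    (hb : b ∈ descSet T w p) (h : T.dist a b = T.dist a x + T.dist x b) :
    x ∈ descSet T w p := by
  by_contra hx
  have hxa := dist_eq_add_of_notMem_descSet hT ha hx
  have hxb := dist_eq_add_of_notMem_descSet hT hb hx
  have hapb : T.dist a b ≤ T.dist a p + T.dist p b := hT.connected.dist_triangle
  rw [T.dist_comm (u := x), T.dist_comm (u := p)] at hxa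
  have hxp : x = p := hT.connected.dist_eq_zero_iff.1 (by omega)
  exact hx (hxp ▸ self_mem_descSet)

theorem dist_induce_descSet_le (hT : T.IsTree) (a b : descSet T w p) :
    (T.induce (descSet T w p)).dist a b ≤ T.dist a b :=
  dist_induce_le_of_convex hT.connected (fun _ ha _ hb _ ↦ descSet_convex hT ha hb) a b

-- The path from `c` to `v` leaves `T_c` at once and stays in `T_p`.
theorem ncard_descSet_add_dist_le_of_notMem (hT : T.IsTree) (hfin : (descSet T w p).Finite)
    (hc : c ∈ descSet T w p) (hv : v ∈ descSet T w p) (hvc : v ∉ descSet T w c) :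
    (descSet T w c).ncard + T.dist c v ≤ (descSet T w p).ncard := by
  classical
  obtain ⟨q, hqpath, hq⟩ := hT.connected.exists_path_of_dist c v
  let F : Finset V := q.support.toFinset.erase c
  have hF_card : F.card = T.dist c v := by
    rw [Finset.card_erase_of_mem (by simp), List.toFinset_card_of_nodup hqpath.support_nodup,
      SimpleGraph.Walk.length_support, hq, Nat.add_sub_cancel]
  have hF_sub : ↑F ⊆ descSet T w p := fun x hx ↦
    descSet_convex hT hc hv
      (dist_eq_add_of_mem_support hq (List.mem_toFinset.1 (Finset.mem_of_mem_erase hx)))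
  have hF_disj : Disjoint (descSet T w c) ↑F := by
    refine Set.disjoint_left.2 fun x hxc hxF ↦ Finset.ne_of_mem_erase hxF ?_
    have hcxv := dist_eq_add_of_mem_support hq (List.mem_toFinset.1 (Finset.mem_of_mem_erase hxF))
    have hvcx := dist_eq_add_of_notMem_descSet hT hxc hvc
    rw [T.dist_comm (u := v), T.dist_comm (u := v)] at hvcx
    exact (hT.connected.dist_eq_zero_iff.1 (by omega : T.dist c x = 0)).symm
  have hsub := descSet_subset_descSet hT.connected hc
  rw [← hF_card, ← Set.ncard_coe_finset, ← Set.ncard_union_eq hF_disj (hfin.subset hsub)]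
  exact Set.ncard_le_ncard (Set.union_subset hsub hF_sub) hfin

theorem ncard_descSet_add_dist_le (hT : T.IsTree) (hfin : (descSet T w p).Finite)
    (hc : c ∈ descSet T w p) :
    (descSet T w c).ncard + T.dist p c ≤ (descSet T w p).ncard := by
  by_cases hp : p ∈ descSet T w c
  · have hcp : T.dist p c = 0 := by
      simp only [descSet, Set.mem_ofPred_eq] at hc hp
      omega
    simpa [hcp] using Set.ncard_le_ncard (descSet_subset_descSet hT.connected hc) hfin
  · rw [T.dist_comm]
    exact ncard_descSet_add_dist_le_of_notMem hT hfin hc self_mem_descSet hp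

end Descendants

/-- The vertices `c 0, …, c m` follow a path towards the root `w`, each `c h` having height exactly
`h` in the tree `T` rooted at `w`. The values `c h` with `h > m` are irrelevant. -/
structure IsSpine {V : Type*} (T : SimpleGraph V) (w : V) (c : ℕ → V) (m : ℕ) : Prop where
  mem_descSet {a b : ℕ} : a ≤ b → b ≤ m → c a ∈ descSet T w (c b)
  dist_eq {a b : ℕ} : a ≤ b → b ≤ m → T.dist (c b) (c a) = b - a
  dist_le {h : ℕ} {x : V} : h ≤ m → x ∈ descSet T w (c h) → T.dist (c h) x ≤ h

section Spine

variable {V : Type*} {T : SimpleGraph V} {w : V} {c : ℕ → V} {m : ℕ}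

theorem exists_isSpine (hT : T.Connected) (hbdd : BddAbove (Set.range (T.dist w)))
    (hm : ∃ u, m ≤ T.dist w u) : ∃ c, IsSpine T w c m := by
  obtain ⟨_, hm⟩ := hm
  obtain ⟨u, hu⟩ : ∃ u, T.dist w u = sSup (Set.range (T.dist w)) :=
    Nat.sSup_mem (Set.range_nonempty_iff_nonempty.2 ⟨w⟩) hbdd
  have hmax (x : V) : T.dist w x ≤ T.dist w u := hu ▸ le_csSup hbdd ⟨x, rfl⟩
  replace hm : m ≤ T.dist w u := hm.trans (hmax _)
  obtain ⟨q, hq⟩ := hT.exists_walk_length_eq_dist w u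
  have hdepth {h : ℕ} : T.dist w (q.getVert (T.dist w u - h)) = T.dist w u - h := by
    simpa using dist_getVert_getVert hq (Nat.zero_le _) (hq ▸ Nat.sub_le (T.dist w u) h)
  have hdist {a b : ℕ} (hab : a ≤ b) (hb : b ≤ m) :
      T.dist (q.getVert (T.dist w u - b)) (q.getVert (T.dist w u - a)) = b - a := by
    rw [dist_getVert_getVert hq (by omega) (by omega)]
    omega
  refine ⟨fun h ↦ q.getVert (T.dist w u - h), fun {a b} hab hb ↦ ?_, hdist, fun {h x} hh hx ↦ ?_⟩
  · simp only [descSet, Set.mem_ofPred_eq, hdepth, hdist hab hb]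
    omega
  · have := hmax x
    simp only [descSet, Set.mem_ofPred_eq, hdepth] at hx
    omega

namespace IsSpine

theorem finite_descSet (hc : IsSpine T w c m) (hT : T.Connected)
    (hfin : (descSet T w (c m)).Finite) {h : ℕ} (hh : h ≤ m) : (descSet T w (c h)).Finite :=
  hfin.subset (descSet_subset_descSet hT (hc.mem_descSet hh le_rfl))

theorem ncard_add_le (hc : IsSpine T w c m) (hT : T.IsTree) (hfin : (descSet T w (c m)).Finite)
    {a b : ℕ} (hab : a ≤ b) (hb : b ≤ m) :
    (descSet T w (c a)).ncard + (b - a) ≤ (descSet T w (c b)).ncard := by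
  rw [← hc.dist_eq hab hb]
  exact ncard_descSet_add_dist_le hT (hc.finite_descSet hT.connected hfin hb)
    (hc.mem_descSet hab hb)

theorem ncard_pos (hc : IsSpine T w c m) (hT : T.Connected)
    (hfin : (descSet T w (c m)).Finite) : 0 < (descSet T w (c 0)).ncard :=
  (Set.ncard_pos (hc.finite_descSet hT hfin (Nat.zero_le m))).2 ⟨_, self_mem_descSet⟩

theorem dist_le_of_ncard_le (hc : IsSpine T w c m) (hT : T.IsTree)
    (hfin : (descSet T w (c m)).Finite) {s h : ℕ} (hsh : s ≤ h) (hh : h ≤ m)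
    (hcard : (descSet T w (c h)).ncard ≤ 2 * s + 1) {v : V} (hv : v ∈ descSet T w (c h)) :
    T.dist (c s) v ≤ s := by
  by_cases hvs : v ∈ descSet T w (c s)
  · exact hc.dist_le (hsh.trans hh) hvs
  · have hpath := ncard_descSet_add_dist_le_of_notMem hT
      (hc.finite_descSet hT.connected hfin hh) (hc.mem_descSet hsh hh) hv hvs
    have hlow := hc.ncard_add_le hT hfin (Nat.zero_le s) (hsh.trans hh)
    have hpos := hc.ncard_pos hT.connected hfin
    omega

theorem exists_center_of_le (hc : IsSpine T w c m) (hT : T.IsTree) {s h : ℕ} (hh : h ≤ m)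
    (hhs : h ≤ s) :
    ∃ u : descSet T w (c h), ∀ v : descSet T w (c h),
      (T.induce (descSet T w (c h))).dist u v ≤ s :=
  ⟨⟨c h, self_mem_descSet⟩, fun v ↦
    (dist_induce_descSet_le hT _ v).trans ((hc.dist_le hh v.2).trans hhs)⟩

theorem exists_center_of_ncard_le (hc : IsSpine T w c m) (hT : T.IsTree)
    (hfin : (descSet T w (c m)).Finite) {s h : ℕ} (hh : h ≤ m)
    (hcard : (descSet T w (c h)).ncard ≤ 2 * s + 1) :
    ∃ u : descSet T w (c h), ∀ v : descSet T w (c h),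
      (T.induce (descSet T w (c h))).dist u v ≤ s := by
  rcases le_total h s with hhs | hsh
  · exact hc.exists_center_of_le hT hh hhs
  · exact ⟨⟨c s, hc.mem_descSet hsh hh⟩, fun v ↦ (dist_induce_descSet_le hT _ v).trans
      (hc.dist_le_of_ncard_le hT hfin hsh hh hcard v.2)⟩

end IsSpine

end Spine

section Counting

variable {n : ℕ → ℕ} {m k : ℕ}

theorem exists_le_or_add_le_of_growth (hpos : 0 < n 0)
    (hn : ∀ a b, a ≤ b → b ≤ m → n a + (b - a) ≤ n b) {s : ℕ} (hs : s + k ≤ n m) :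
    (∃ h ≤ m, (h ≤ s ∨ n h ≤ 2 * s + 1) ∧ s + k ≤ n h) ∨ s + m + 3 ≤ n m + k := by
  classical
  have hex : ∃ x, s + k ≤ n x := ⟨m, hs⟩
  set x := Nat.find hex
  have hxm : x ≤ m := Nat.find_min' hex hs
  by_cases hcase : x ≤ s ∨ n x ≤ 2 * s + 1
  · exact Or.inl ⟨x, hxm, hcase, Nat.find_spec hex⟩
  · have hpred : n (x - 1) < s + k := not_le.1 (Nat.find_min hex (show x - 1 < x by omega))
    have hlow := hn 0 (x - 1) (Nat.zero_le _) (by omega)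
    have hhigh := hn x m hxm le_rfl
    omega

theorem card_add_two_le_of_gap {R : Finset ℕ} {N : ℕ} (hRm : ∀ s ∈ R, s ≤ m) (hmN : m < N)
    (hNm : N < m + k) (hgap : ∀ s ∈ R, s + k ≤ N → s + m + 3 ≤ N + k) :
    R.card + 2 ≤ 2 * k := by
  have hsub : R ⊆ Finset.range (N + k - m - 2) ∪ Finset.Icc (N + 1 - k) m := by
    intro s hs
    have := hRm s hs
    have := hgap s hs
    simp only [Finset.mem_union, Finset.mem_range, Finset.mem_Icc]
    omega
  have hcard := (Finset.card_le_card hsub).trans (Finset.card_union_le _ _)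
  rw [Finset.card_range, Nat.card_Icc] at hcard
  omega

theorem exists_mem_add_le_of_growth {R : Finset ℕ} (hm : m ∈ R) (hRm : ∀ s ∈ R, s ≤ m)
    (hpos : 0 < n 0) (hn : ∀ a b, a ≤ b → b ≤ m → n a + (b - a) ≤ n b) :
    ∃ s ∈ R, ∃ h ≤ m, (h ≤ s ∨ n h ≤ 2 * s + 1) ∧ s + (R.card + 1) / 2 ≤ n h := by
  by_contra! hsmall
  have hmN : m < n m := by
    have := hn 0 m (Nat.zero_le m) le_rfl
    omega
  have hNm : n m < m + (R.card + 1) / 2 := hsmall m hm m le_rfl (Or.inl le_rfl)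
  have hcard := card_add_two_le_of_gap hRm hmN hNm fun s hs hsN ↦
    (exists_le_or_add_le_of_growth hpos hn hsN).resolve_left fun ⟨h, hh, hcase, hle⟩ ↦
      (hsmall s hs h hh hcase).not_ge hle
  omega

end Counting

theorem exists_subtree_of_radius_and_order_general {V : Type*} {T : SimpleGraph V}
    (hT : T.IsTree) {w : V} (hbdd : BddAbove (Set.range (T.dist w))) {R : Finset ℕ}
    (hR : R.Nonempty) (hdeep : ∃ u, ∀ s ∈ R, s ≤ T.dist w u) :
    ∃ s ∈ R, ∃ p : V,
      (∃ u : descSet T w p, ∀ v : descSet T w p, (T.induce (descSet T w p)).dist u v ≤ s) ∧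
      ((s + (R.card + 1) / 2 : ℕ) : ℕ∞) ≤ (descSet T w p).encard := by
  obtain ⟨m, hm, hRm⟩ : ∃ m ∈ R, ∀ s ∈ R, s ≤ m := R.exists_max_image id hR
  obtain ⟨c, hc⟩ := exists_isSpine hT.connected hbdd (hdeep.imp fun _ hu ↦ hu m hm)
  rcases (descSet T w (c m)).finite_or_infinite with hfin | hinf
  · obtain ⟨s, hs, h, hh, hcase, hcard⟩ := exists_mem_add_le_of_growth hm hRm
      (hc.ncard_pos hT.connected hfin) (fun _ _ ↦ hc.ncard_add_le hT hfin)
    exact ⟨s, hs, c h,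
      hcase.elim (hc.exists_center_of_le hT hh) (hc.exists_center_of_ncard_le hT hfin hh),
      (Nat.cast_le.2 hcard).trans (Set.ncard_le_encard _)⟩
  · exact ⟨m, hm, c m, hc.exists_center_of_le hT le_rfl le_rfl, by simp [hinf.encard_eq]⟩

/-- **Key step (Bonato–Kamali).** Let `T` be a finite tree rooted at a vertex `w`, and
let `R = {r_1 < r_2 < … < r_j}` be a set of `j` distinct non-negative integers,
represented by a strictly monotone enumeration `r : Fin j → ℕ`. Suppose some vertex of
`T` has depth at least `r_j`. Then there exist `r* ∈ R` and a vertex `p` such that the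
subtree `T_p` (consisting of `p` and all its descendants, with the induced graph
structure) has radius at most `r*` (witnessed by a center `u` of `T_p` within distance
`r*` of every vertex of `T_p`) and has order at least `r* + ⌊j/2⌋ - 3`. -/
theorem exists_subtree_of_radius_and_order {V : Type*} [Fintype V]
    (T : SimpleGraph V) (hT : T.IsTree) (w : V)
    (j : ℕ) (hj : 0 < j) (r : Fin j → ℕ) (hr : StrictMono r)
    (hdeep : ∃ u : V, r ⟨j - 1, Nat.sub_lt hj Nat.one_pos⟩ ≤ T.dist w u) :
    ∃ (i : Fin j) (p : V),
      (∃ u : ↥(descSet T w p), ∀ v : ↥(descSet T w p),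
        (T.induce (descSet T w p)).dist u v ≤ r i) ∧
      (r i : ℤ) + (j : ℤ) / 2 - 3 ≤ (Nat.card ↥(descSet T w p) : ℤ) := by
  obtain ⟨u, hu⟩ := hdeep
  obtain ⟨s, hs, p, hradius, hcard⟩ := exists_subtree_of_radius_and_order_general
    (R := Finset.univ.image r) hT (Set.finite_range (T.dist w)).bddAbove
    (Finset.image_nonempty.2 ⟨⟨0, hj⟩, Finset.mem_univ _⟩)
    ⟨u, Finset.forall_mem_image.2 fun i _ ↦ (hr.monotone (Nat.le_sub_one_of_lt i.2)).trans hu⟩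
  obtain ⟨i, -, rfl⟩ := Finset.mem_image.1 hs
  refine ⟨i, p, hradius, ?_⟩
  rw [Finset.card_image_of_injective _ hr.injective, Finset.card_fin,
    ← (Set.toFinite _).cast_ncard_eq, Nat.cast_le, ← Nat.card_coe_set_eq] at hcard
  omega
end

section
/- Let T be a finite tree of order n and let k be a positive integer with n ≤ (3k² − 16k)/4. Then the vertex set of T can be partitioned into k (possibly empty) sets S_0, S_1, …, S_{k−1} such that for each r, the set S_r induces a subtree of T (a connected subgraph, if nonempty) whose radius is at most r. -/
/-! Root the tree and prune, from a leaf at maximal depth upwards, a subtree whose depth is exactly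
the largest available radius `m`. If it has more than `3 * m / 2` vertices, give it the radius `m`:
the part that remains is then small enough for the radii below `m`. Otherwise put it aside and prune
again. The sets put aside are light: they have diameter at least `m` but at most `3 * m / 2`
vertices, so they are nearly paths, and a counting argument along a diametral path shows that they
can be cut into two subtrees of radii `x` and `y` as soon as `2 * x + 2 * y + 2` reaches their size
and `x` is not too small. Distributing them, largest first, either to the largest free radius alone
or to the largest and the smallest free radii together keeps the free radii an interval
`lo, …, r - 1`, and keeps the inequality `4 * w + 16 * r + (r + lo) ^ 2 ≤ 4 * r ^ 2` between this
interval and the number `w` of vertices still to be covered. -/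

namespace TreePartition

open SimpleGraph Finset

variable {V : Type*} {G T : SimpleGraph V}

section Geodesic

/-- Geodesic convexity with respect to the graph distance. In a tree the nonempty convex sets are
exactly the vertex sets of subtrees, so this is how subtrees are encoded throughout. The notion is
meant for connected graphs, since `SimpleGraph.dist` is `0` between different components. -/
def GeodConvex (G : SimpleGraph V) (S : Set V) : Prop :=
  ∀ ⦃u⦄, u ∈ S → ∀ ⦃v⦄, v ∈ S → ∀ ⦃z⦄, G.dist u z + G.dist z v = G.dist u v → z ∈ S

/-- Convex sets of radius at most `r`, where the radius is taken over centers in the set. -/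
def ConvexRadiusLE (G : SimpleGraph V) (S : Set V) (r : ℕ) : Prop :=
  GeodConvex G S ∧ ∃ c ∈ S, ∀ v ∈ S, G.dist c v ≤ r

/-- Convex sets of diameter at least `d`. -/
def ConvexDiamGE (G : SimpleGraph V) (S : Set V) (d : ℕ) : Prop :=
  GeodConvex G S ∧ ∃ u ∈ S, ∃ v ∈ S, d ≤ G.dist u v

/-- `p 0, p 1, …, p n` is a geodesic of `G`; the values of `p` beyond `n` are irrelevant. -/
def IsGeodesic (G : SimpleGraph V) (p : ℕ → V) (n : ℕ) : Prop :=
  ∀ ⦃i j⦄, i ≤ j → j ≤ n → G.dist (p i) (p j) = j - i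

theorem geodConvex_univ : GeodConvex G Set.univ := fun _ _ _ _ _ _ => Set.mem_univ _

theorem GeodConvex.inter {S S' : Set V} (hS : GeodConvex G S) (hS' : GeodConvex G S') :
    GeodConvex G (S ∩ S') :=
  fun _ hu _ hv _ hz => ⟨hS hu.1 hv.1 hz, hS' hu.2 hv.2 hz⟩

theorem dist_add_dist_of_mem_support {u v x : V} {w : G.Walk u v} (hw : w.length = G.dist u v)
    (hx : x ∈ w.support) : G.dist u x + G.dist x v = G.dist u v := by
  obtain ⟨w₁, w₂, rfl⟩ := Walk.mem_support_iff_exists_append.mp hx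
  rw [Walk.length_append] at hw
  have := dist_le w₁
  have := dist_le w₂
  have := w₁.reachable.dist_triangle_left v
  omega

theorem exists_isGeodesic {s t : V} (h : G.Reachable s t) :
    ∃ p : ℕ → V, p 0 = s ∧ p (G.dist s t) = t ∧ IsGeodesic G p (G.dist s t) := by
  obtain ⟨w, hw⟩ := h.exists_walk_length_eq_dist
  refine ⟨w.getVert, w.getVert_zero, hw ▸ w.getVert_length, fun i j hij hj => ?_⟩
  have hstart : G.dist s (w.getVert i) ≤ i := by
    simpa [hw, (hij.trans hj)] using dist_le (w.take i)
  have hmid : G.dist (w.getVert i) (w.getVert j) ≤ j - i := by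
    have := dist_le ((w.drop i).take (j - i))
    simp only [Walk.drop_getVert, Nat.add_sub_cancel' hij, Walk.take_length] at this
    exact this.trans (min_le_left _ _)
  have hend : G.dist (w.getVert j) t ≤ G.dist s t - j := by
    simpa [hw] using dist_le (w.drop j)
  have := (w.take i).reachable.dist_triangle_left t
  have := (w.drop j).reachable.dist_triangle_right (w.getVert i)
  omega

theorem IsGeodesic.adj {p : ℕ → V} {n i : ℕ} (hp : IsGeodesic G p n) (hi : i < n) :
    G.Adj (p i) (p (i + 1)) := by
  rw [← dist_eq_one_iff_adj, hp (i.le_add_right 1) hi, Nat.add_sub_cancel_left]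

theorem GeodConvex.isGeodesic_mem {S : Set V} (hS : GeodConvex G S) {p : ℕ → V} {n i : ℕ}
    (hp : IsGeodesic G p n) (h₀ : p 0 ∈ S) (hn : p n ∈ S) (hi : i ≤ n) : p i ∈ S := by
  refine hS h₀ hn ?_
  rw [hp i.zero_le hi, hp hi le_rfl, hp n.zero_le le_rfl]
  omega

theorem GeodConvex.exists_walk_induce {S : Set V} (hS : GeodConvex G S) (u v : S)
    (h : G.Reachable u v) : ∃ w : (G.induce S).Walk u v, w.length = G.dist u v := by
  obtain ⟨w, hw⟩ := h.exists_walk_length_eq_dist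
  refine ⟨w.induce S fun x hx => hS u.2 v.2 (dist_add_dist_of_mem_support hw hx), ?_⟩
  rw [← hw, ← Walk.length_map (Embedding.induce S).toHom, Walk.map_induce]
  rfl

theorem ConvexRadiusLE.exists_induce_dist_le {S : Set V} {r : ℕ} (hS : ConvexRadiusLE G S r)
    (hG : G.Preconnected) :
    (G.induce S).Connected ∧ ∃ u : S, ∀ v : S, (G.induce S).dist u v ≤ r := by
  obtain ⟨hconv, c, hc, hr⟩ := hS
  refine ⟨(connected_iff_exists_forall_reachable _).mpr ⟨⟨c, hc⟩, fun v => ?_⟩,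
    ⟨c, hc⟩, fun v => ?_⟩
  · exact (hconv.exists_walk_induce ⟨c, hc⟩ v (hG c v)).choose.reachable
  · obtain ⟨w, hw⟩ := hconv.exists_walk_induce ⟨c, hc⟩ v (hG c v)
    exact (dist_le w).trans (hw ▸ hr v v.2)

end Geodesic

section Tree

/-- The two geodesics `w ⋯ a` and `b ⋯ z` lie on different sides of the edge `ab`, so joining them
along that edge gives a path, which in a tree is the geodesic. -/
theorem dist_eq_dist_add_one_add_dist (hT : T.IsTree) {a b w z : V} (hab : T.Adj a b)
    (hw : T.dist w a < T.dist w b) (hz : T.dist z b < T.dist z a) :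
    T.dist w z = T.dist w a + 1 + T.dist b z := by
  obtain ⟨p, hp⟩ := hT.connected.exists_walk_length_eq_dist w a
  obtain ⟨q, hq⟩ := hT.connected.exists_walk_length_eq_dist b z
  have hdisj : p.support.Disjoint q.support := by
    intro x hxp hxq
    have := dist_add_dist_of_mem_support hp hxp
    have := dist_add_dist_of_mem_support hq hxq
    have := hT.connected.dist_triangle (u := w) (v := x) (w := b)
    have := hT.connected.dist_triangle (u := z) (v := x) (w := a)
    simp only [T.dist_comm (u := z), T.dist_comm (v := b)] at *
    omega
  have hpath : (p.append (.cons hab q)).IsPath := by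
    rw [Walk.isPath_def, Walk.support_append, Walk.support_cons, List.tail_cons]
    exact (p.isPath_of_length_eq_dist hp).support_nodup.append
      (q.isPath_of_length_eq_dist hq).support_nodup hdisj
  obtain ⟨g, hg, hgl⟩ := hT.connected.exists_path_of_dist w z
  rw [← hgl, (hT.existsUnique_path w z).unique hg hpath, Walk.length_append, Walk.length_cons]
  omega

theorem geodConvex_halfspace (hT : T.IsTree) {a b : V} (hab : T.Adj a b) :
    GeodConvex T {w | T.dist w a < T.dist w b} := by
  intro u hu v hv z hz
  by_contra hza
  have hzb : T.dist z b < T.dist z a :=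
    lt_of_le_of_ne (not_lt.mp hza) (hT.dist_ne_of_adj z hab).symm
  have huz := dist_eq_dist_add_one_add_dist hT hab hu hzb
  have hvz := dist_eq_dist_add_one_add_dist hT hab hv hzb
  have := hT.connected.dist_triangle (u := u) (v := a) (w := v)
  rw [T.dist_comm (u := v) (v := z)] at hvz
  rw [T.dist_comm (u := a)] at this
  omega

theorem IsGeodesic.exists_gate (hT : T.IsTree) {p : ℕ → V} {n : ℕ} (hp : IsGeodesic T p n)
    (v : V) :
    ∃ q ≤ n, ∀ i ≤ n, T.dist (p i) v = T.dist (p q) v + (q - i) + (i - q) := by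
  obtain ⟨q, hqn, hmin⟩ := (range (n + 1)).exists_min_image (fun i => T.dist v (p i))
    nonempty_range_add_one
  simp only [mem_range, Nat.lt_succ_iff] at hqn hmin
  refine ⟨q, hqn, fun i hi => ?_⟩
  rcases lt_trichotomy i q with hiq | rfl | hqi
  · obtain ⟨m, rfl⟩ : ∃ m, q = m + 1 := ⟨q - 1, by omega⟩
    have hadj := hp.adj hqn
    have hne := hT.dist_ne_of_adj v hadj
    have hle := hmin m (by omega)
    have him := hp (i := i) (j := m) (by omega) (by omega)
    have hiq := hp (i := i) (j := m + 1) (by omega) (by omega)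
    have := dist_eq_dist_add_one_add_dist hT hadj (w := p i) (z := v) (by omega) (by omega)
    omega
  · omega
  · have hadj := hp.adj (i := q) (by omega)
    have hne := hT.dist_ne_of_adj v hadj
    have hle := hmin (q + 1) (by omega)
    have hqi' := hp (i := q) (j := i) (by omega) hi
    have hqi'' := hp (i := q + 1) (j := i) (by omega) hi
    rw [T.dist_comm] at hqi' hqi''
    have := dist_eq_dist_add_one_add_dist hT hadj.symm (w := p i) (z := v) (by omega) (by omega)
    omega

end Tree

section DiametralFrame

/-- Coordinates relative to a longest geodesic `path 0, …, path len` of `S`: each vertex `v` hangs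
at distance `height v` from its projection `path (proj v)`, and every geodesic from `v` to the path
enters it there. Values of `path` beyond `len` are irrelevant. -/
structure DiametralFrame (G : SimpleGraph V) (S : Set V) where
  len : ℕ
  path : ℕ → V
  proj : V → ℕ
  height : V → ℕ
  path_mem : ∀ i ≤ len, path i ∈ S
  proj_le : ∀ v, proj v ≤ len
  /-- One of the two truncated differences vanishes, so their sum is `|proj v - i|`. -/
  dist_path : ∀ v, ∀ i ≤ len, G.dist (path i) v = height v + (proj v - i) + (i - proj v)
  dist_le : ∀ u ∈ S, ∀ v ∈ S, G.dist u v ≤ len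

theorem exists_diametralFrame (hT : T.IsTree) {S : Finset V} (hS : GeodConvex T S)
    (hne : S.Nonempty) : Nonempty (DiametralFrame T (S : Set V)) := by
  obtain ⟨⟨s, t⟩, hst, hmax⟩ := (S ×ˢ S).exists_max_image (fun x => T.dist x.1 x.2)
    (hne.product hne)
  obtain ⟨hs, ht⟩ := mem_product.mp hst
  obtain ⟨p, hp₀, hpt, hp⟩ := exists_isGeodesic (hT.connected s t)
  choose q hq hdist using hp.exists_gate hT
  exact ⟨{
    len := T.dist s t
    path := p
    proj := q
    height := fun v => T.dist (p (q v)) v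
    path_mem := fun i hi => hS.isGeodesic_mem hp (by rwa [hp₀]) (by rwa [hpt]) hi
    proj_le := hq
    dist_path := hdist
    dist_le := fun u hu v hv => hmax (u, v) (mk_mem_product hu hv) }⟩

namespace DiametralFrame

section General

variable {S : Set V} (F : DiametralFrame G S)

/-- The same coordinates with the path traversed backwards. -/
def reverse : DiametralFrame G S where
  len := F.len
  path i := F.path (F.len - i)
  proj v := F.len - F.proj v
  height := F.height
  path_mem _ _ := F.path_mem _ (Nat.sub_le _ _)
  proj_le _ := Nat.sub_le _ _
  dist_path v i hi := by
    have := F.dist_path v (F.len - i) (Nat.sub_le _ _)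
    have := F.proj_le v
    omega
  dist_le := F.dist_le

theorem proj_path_and_height_path {i : ℕ} (hi : i ≤ F.len) :
    F.proj (F.path i) = i ∧ F.height (F.path i) = 0 := by
  have := F.dist_path (F.path i) i hi
  rw [dist_self] at this
  omega

theorem proj_path {i : ℕ} (hi : i ≤ F.len) : F.proj (F.path i) = i :=
  (F.proj_path_and_height_path hi).1

theorem height_path {i : ℕ} (hi : i ≤ F.len) : F.height (F.path i) = 0 :=
  (F.proj_path_and_height_path hi).2

theorem height_le_proj {v : V} (hv : v ∈ S) : F.height v ≤ F.proj v := by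
  have := F.dist_path v F.len le_rfl
  have := F.dist_le _ (F.path_mem F.len le_rfl) v hv
  have := F.proj_le v
  omega

theorem height_add_proj_le_len {v : V} (hv : v ∈ S) : F.height v + F.proj v ≤ F.len := by
  have := F.reverse.height_le_proj hv
  have := F.proj_le v
  simp only [reverse] at *
  omega

theorem isGeodesic_path : IsGeodesic G F.path F.len := by
  intro i j hij hj
  rw [F.dist_path _ i (hij.trans hj), F.proj_path hj, F.height_path hj]
  omega

theorem convexRadiusLE_of_len_le (hS : GeodConvex G S) {r : ℕ} (hr : F.len ≤ 2 * r) :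
    ConvexRadiusLE G S r := by
  refine ⟨hS, F.path (F.len / 2), F.path_mem _ (by omega), fun v hv => ?_⟩
  have := F.dist_path v (F.len / 2) (by omega)
  have := F.height_le_proj hv
  have := F.height_add_proj_le_len hv
  omega

end General

section Sides

variable {S : Set V} (F : DiametralFrame T S)

theorem geodConvex_proj_le (hT : T.IsTree) (i : ℕ) : GeodConvex T {v | F.proj v ≤ i} := by
  rcases lt_or_ge i F.len with hi | hi
  · convert geodConvex_halfspace hT (F.isGeodesic_path.adj hi) using 3 with v
    rw [T.dist_comm, F.dist_path v i hi.le, T.dist_comm, F.dist_path v (i + 1) hi]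
    omega
  · convert geodConvex_univ
    exact Set.eq_univ_of_forall fun v => (F.proj_le v).trans hi

theorem convexRadiusLE_proj_le (hT : T.IsTree) (hS : GeodConvex T S) {b r : ℕ}
    (hr : ∀ v ∈ S, F.proj v ≤ b → F.height v + F.proj v ≤ 2 * r) :
    ConvexRadiusLE T {v ∈ S | F.proj v ≤ b} r := by
  have hmid : min r (min b F.len) ≤ F.len := by omega
  refine ⟨hS.inter (F.geodConvex_proj_le hT b), F.path (min r (min b F.len)),
    ⟨F.path_mem _ hmid, ?_⟩, fun v hv => ?_⟩
  · rw [F.proj_path hmid]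
    omega
  · have := F.dist_path v _ hmid
    have := F.height_le_proj hv.1
    have := F.height_add_proj_le_len hv.1
    have := hr v hv.1 hv.2
    have : F.proj v ≤ b := hv.2
    omega

theorem convexRadiusLE_lt_proj (hT : T.IsTree) (hS : GeodConvex T S) {b r : ℕ} (hb : b < F.len)
    (hr : ∀ v ∈ S, b < F.proj v → F.len + F.height v ≤ 2 * r + F.proj v) :
    ConvexRadiusLE T {v ∈ S | b < F.proj v} r := by
  have hiff (v : V) : F.reverse.proj v ≤ F.len - (b + 1) ↔ b < F.proj v := by
    have := F.proj_le v
    simp only [reverse]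
    omega
  simp only [← hiff] at hr ⊢
  refine F.reverse.convexRadiusLE_proj_le hT hS fun v hv hvb => ?_
  have := hr v hv hvb
  have := F.proj_le v
  simp only [reverse]
  omega

end Sides

section Card

variable {S : Finset V} (F : DiametralFrame G (S : Set V))

/-- The geodesic from `v` down to the path lies in the fibre of `v`. -/
theorem height_lt_card_fiber (hG : G.Connected) (hS : GeodConvex G S) {v : V} (hv : v ∈ S) :
    F.height v < #{z ∈ S | F.proj z = F.proj v} := by
  have hlen : G.dist v (F.path (F.proj v)) = F.height v := by
    rw [G.dist_comm, F.dist_path v _ (F.proj_le v)]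
    omega
  obtain ⟨g, hg₀, hg₁, hg⟩ := exists_isGeodesic (hG v (F.path (F.proj v)))
  rw [hlen] at hg hg₁
  rw [← Nat.succ_le_iff, ← card_range (F.height v).succ]
  refine card_le_card_of_injOn g (fun j hj => ?_) (fun i hi j hj hij => ?_)
  · have hj : j ≤ F.height v := Nat.lt_succ_iff.mp (mem_range.mp hj)
    have hvj := hg j.zero_le hj
    have hjp := hg hj le_rfl
    rw [hg₀] at hvj
    rw [hg₁, G.dist_comm, F.dist_path _ _ (F.proj_le v)] at hjp
    have htri := hG.dist_triangle (u := F.path (F.proj (g j))) (v := g j) (w := v)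
    rw [F.dist_path v _ (F.proj_le _), F.dist_path (g j) _ (F.proj_le _),
      G.dist_comm (v := v)] at htri
    refine mem_coe.mpr (mem_filter.mpr ⟨?_, by omega⟩)
    exact hS.isGeodesic_mem hg (hg₀ ▸ hv) (hg₁ ▸ F.path_mem _ (F.proj_le v)) hj
  · have hi : i ≤ F.height v := Nat.lt_succ_iff.mp (mem_range.mp hi)
    have hj : j ≤ F.height v := Nat.lt_succ_iff.mp (mem_range.mp hj)
    have hvi := hg i.zero_le hi
    rw [hij, hg j.zero_le hj] at hvi
    omega

theorem len_add_height_add_height_lt_card (hG : G.Connected) (hS : GeodConvex G S) {u v : V}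
    (hu : u ∈ S) (hv : v ∈ S) (huv : F.proj u ≠ F.proj v) :
    F.len + F.height u + F.height v < #S := by
  have hfiber : ∀ j ∈ range (F.len + 1),
      1 + (if j = F.proj u then F.height u else 0) + (if j = F.proj v then F.height v else 0) ≤
        #{z ∈ S | F.proj z = j} := by
    intro j hj
    have hj : j ≤ F.len := Nat.lt_succ_iff.mp (mem_range.mp hj)
    have hcard := F.height_lt_card_fiber hG hS (F.path_mem j hj)
    rw [F.proj_path hj, F.height_path hj] at hcard
    have hcard_u := F.height_lt_card_fiber hG hS hu
    have hcard_v := F.height_lt_card_fiber hG hS hv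
    split_ifs with hju hjv hjv <;> subst_vars <;> omega
  calc F.len + F.height u + F.height v
      < F.len + 1 + F.height u + F.height v := by omega
    _ = ∑ j ∈ range (F.len + 1), (1 + (if j = F.proj u then F.height u else 0) +
          (if j = F.proj v then F.height v else 0)) := by
        simp [sum_add_distrib, F.proj_le]
    _ ≤ ∑ j ∈ range (F.len + 1), #{z ∈ S | F.proj z = j} := sum_le_sum hfiber
    _ = #S := (card_eq_sum_card_fiberwise fun v _ => by
        simpa [Nat.lt_succ_iff] using F.proj_le v).symm

theorem len_add_height_lt_card (hG : G.Connected) (hS : GeodConvex G S) {u : V} (hu : u ∈ S) :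
    F.len + F.height u < #S := by
  rcases Nat.eq_zero_or_pos F.len with hlen | hlen
  · have := F.height_lt_card_fiber hG hS hu
    have := card_filter_le S (fun z => F.proj z = F.proj u)
    omega
  · obtain ⟨i, hi, hiu⟩ : ∃ i ≤ F.len, F.proj u ≠ F.proj (F.path i) := by
      by_cases hu₀ : F.proj u = 0
      · exact ⟨F.len, le_rfl, by rw [F.proj_path le_rfl]; omega⟩
      · exact ⟨0, F.len.zero_le, by rwa [F.proj_path F.len.zero_le]⟩
    have := F.len_add_height_add_height_lt_card hG hS hu (F.path_mem i hi) hiu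
    omega

end Card

section Split

variable [DecidableEq V] {S : Finset V} (F : DiametralFrame T (S : Set V))

/-- Cut the path just before the first projection of a vertex too far from `path 0` for radius
`y`. If the other side still does not have radius at most `x`, two far vertices with different
projections would make `S` too large, hence one vertex is far from both ends. -/
theorem exists_split_or_far (hT : T.IsTree) (hS : GeodConvex T S) {x y : ℕ}
    (hlen : 2 * x < F.len) (hyx : y ≤ x) (hcard : #S ≤ 2 * x + 2 * y + 2) :
    (∃ A ⊆ S, ConvexRadiusLE T A x ∧ ConvexRadiusLE T (S \ A : Finset V) y) ∨
      ∃ u ∈ S, 2 * y < F.proj u + F.height u ∧ 2 * x + F.proj u < F.len + F.height u := by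
  obtain ⟨v, hv, hmin⟩ := {v ∈ S | 2 * y < F.proj v + F.height v}.exists_min_image F.proj
    ⟨F.path F.len, mem_filter.mpr
      ⟨F.path_mem _ le_rfl, by rw [F.proj_path le_rfl]; omega⟩⟩
  simp only [mem_filter, and_imp] at hv hmin
  obtain ⟨hvS, hvfar⟩ := hv
  have hheight := F.height_le_proj hvS
  have hproj := F.proj_le v
  by_cases hx : ∀ w ∈ S, F.proj v - 1 < F.proj w → F.len + F.height w ≤ 2 * x + F.proj w
  · refine Or.inl ⟨{w ∈ S | F.proj v - 1 < F.proj w}, filter_subset _ _, ?_, ?_⟩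
    · rw [coe_filter]
      exact F.convexRadiusLE_lt_proj hT hS (by omega) hx
    · rw [← filter_not, coe_filter]
      simp only [not_lt]
      refine F.convexRadiusLE_proj_le hT hS fun w hw hwv => ?_
      by_contra hfar
      have := hmin w hw (by omega)
      omega
  · push Not at hx
    obtain ⟨w, hwS, hvw, hwfar⟩ := hx
    right
    by_cases hproj_eq : F.proj v = F.proj w
    · rcases le_total (F.height v) (F.height w) with h | h
      · exact ⟨w, hwS, by omega, by omega⟩
      · exact ⟨v, hvS, by omega, by omega⟩
    · have := F.len_add_height_add_height_lt_card hT.connected hS hvS hwS hproj_eq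
      omega

end Split

end DiametralFrame

end DiametralFrame

section Splitting

theorem convexRadiusLE_of_card_le (hT : T.IsTree) {S : Finset V} (hS : GeodConvex T S)
    (hne : S.Nonempty) {r : ℕ} (hr : #S ≤ 2 * r + 1) : ConvexRadiusLE T S r := by
  obtain ⟨F⟩ := exists_diametralFrame hT hS hne
  have := F.len_add_height_lt_card hT.connected hS (F.path_mem 0 F.len.zero_le)
  exact F.convexRadiusLE_of_len_le hS (by omega)

theorem ConvexDiamGE.lt_card (hT : T.IsTree) {S : Finset V} {d : ℕ} (hS : ConvexDiamGE T S d) :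
    d < #S := by
  obtain ⟨hconv, u, hu, v, hv, hd⟩ := hS
  obtain ⟨F⟩ := exists_diametralFrame hT hconv ⟨u, hu⟩
  have := F.len_add_height_lt_card hT.connected hconv hu
  have := F.dist_le u hu v hv
  omega

/-- If neither orientation of a diametral path yields a splitting, there are vertices far from both
ends for either orientation, and together with the long path they make `S` too large. -/
theorem ConvexDiamGE.exists_split [DecidableEq V] (hT : T.IsTree) {S : Finset V} {d x y : ℕ}
    (hS : ConvexDiamGE T S d) (hyx : y ≤ x) (hcard : #S ≤ 2 * x + 2 * y + 2)
    (hcard' : 2 * #S ≤ 4 * x + d + 3) :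
    ConvexRadiusLE T S x ∨
      ∃ A ⊆ S, ConvexRadiusLE T A x ∧ ConvexRadiusLE T (S \ A : Finset V) y := by
  obtain ⟨hconv, a, ha, b, hb, hd⟩ := hS
  obtain ⟨F⟩ := exists_diametralFrame hT hconv ⟨a, ha⟩
  rcases le_or_gt F.len (2 * x) with hlen | hlen
  · exact Or.inl (F.convexRadiusLE_of_len_le hconv hlen)
  refine Or.inr (of_not_not fun hsplit => ?_)
  obtain ⟨u, hu, hu_left, hu_right⟩ :=
    (F.exists_split_or_far hT hconv hlen hyx hcard).resolve_left hsplit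
  obtain ⟨v, hv, hv_right, hv_left⟩ :=
    (F.reverse.exists_split_or_far hT hconv hlen hyx hcard).resolve_left hsplit
  simp only [DiametralFrame.reverse] at hv_right hv_left
  have := F.proj_le u
  have := F.proj_le v
  have := F.dist_le a ha b hb
  by_cases huv : F.proj u = F.proj v
  · have := F.len_add_height_lt_card hT.connected hconv hu
    have := F.len_add_height_lt_card hT.connected hconv hv
    omega
  · have := F.len_add_height_add_height_lt_card hT.connected hconv hu hv huv
    omega

theorem GeodConvex.filter_dist_lt (hT : T.IsTree) {S : Finset V} (hS : GeodConvex T S) {a b : V}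
    (hab : T.Adj a b) : GeodConvex T ({w ∈ S | T.dist w a < T.dist w b} : Finset V) := by
  rw [coe_filter]
  exact hS.inter (geodConvex_halfspace hT hab)

theorem sdiff_filter_dist_lt [DecidableEq V] (hT : T.IsTree) (S : Finset V) {a b : V}
    (hab : T.Adj a b) :
    S \ {w ∈ S | T.dist w a < T.dist w b} = {w ∈ S | T.dist w b < T.dist w a} := by
  rw [← filter_not]
  refine filter_congr fun w _ => ?_
  have := hT.dist_ne_of_adj w hab
  omega

/-- The part pruned off hangs below the vertex at distance `d` from the far end of a longest
geodesic starting at some root. -/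
theorem GeodConvex.convexRadiusLE_or_exists_prune [DecidableEq V] (hT : T.IsTree) {S : Finset V}
    (hS : GeodConvex T S) (hne : S.Nonempty) (d : ℕ) :
    ConvexRadiusLE T S d ∨ ∃ A ⊆ S, ConvexRadiusLE T A d ∧ ConvexDiamGE T A d ∧
      GeodConvex T (S \ A : Finset V) ∧ (S \ A).Nonempty := by
  obtain ⟨ρ, hρ⟩ := hne
  obtain ⟨z, hz, hmax⟩ := S.exists_max_image (T.dist ρ) ⟨ρ, hρ⟩
  rcases le_or_gt (T.dist ρ z) d with hzd | hzd
  · exact Or.inl ⟨hS, ρ, hρ, fun v hv => (hmax v hv).trans hzd⟩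
  obtain ⟨m, hm⟩ : ∃ m, T.dist ρ z = m + 1 + d := ⟨T.dist ρ z - d - 1, by omega⟩
  obtain ⟨p, hp₀, hpz, hp⟩ := exists_isGeodesic (hT.connected ρ z)
  rw [hm] at hp hpz
  have hadj : T.Adj (p m) (p (m + 1)) := hp.adj (by omega)
  have hcS : p (m + 1) ∈ S := hS.isGeodesic_mem hp (hp₀ ▸ hρ) (hpz ▸ hz) (by omega)
  have hρm : T.dist ρ (p m) = m := by simpa [hp₀] using hp m.zero_le (by omega)
  have hρc : T.dist ρ (p (m + 1)) = m + 1 := by simpa [hp₀] using hp (m + 1).zero_le (by omega)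
  have hzm : T.dist z (p m) = m + 1 + d - m := by
    simpa [hpz, T.dist_comm] using hp (i := m) (j := m + 1 + d) (by omega) le_rfl
  have hzc : T.dist z (p (m + 1)) = d := by
    simpa [hpz, T.dist_comm] using hp (i := m + 1) (j := m + 1 + d) (by omega) le_rfl
  have hconv := hS.filter_dist_lt hT hadj.symm
  have hcA : p (m + 1) ∈ {w ∈ S | T.dist w (p (m + 1)) < T.dist w (p m)} := by
    simpa [hcS] using (hT.connected _ _).pos_dist_of_ne hadj.symm.ne
  have hzA : z ∈ {w ∈ S | T.dist w (p (m + 1)) < T.dist w (p m)} :=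
    mem_filter.mpr ⟨hz, by omega⟩
  refine Or.inr ⟨_, filter_subset _ S, ⟨hconv, _, hcA, fun v hv => ?_⟩,
    ⟨hconv, z, hzA, _, hcA, hzc.ge⟩, ?_⟩
  · obtain ⟨hvS, hv⟩ := mem_filter.mp hv
    have := dist_eq_dist_add_one_add_dist hT hadj (w := ρ) (z := v) (by omega) hv
    have := hmax v hvS
    omega
  · rw [sdiff_filter_dist_lt hT S hadj.symm]
    exact ⟨hS.filter_dist_lt hT hadj, ρ, mem_filter.mpr ⟨hρ, by omega⟩⟩

end Splitting

section Packing

/-- The sets in `D` can be cut up and distributed over the radii in `I`, so that each `i ∈ I`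
receives nothing or a convex set of radius at most `i`. The equality of multisets says that each
vertex is received as often as it occurs in the sets of `D`; for disjoint sets it says that the
received sets partition their union. -/
def Packable (G : SimpleGraph V) (D : Multiset (Finset V)) (I : Finset ℕ) : Prop :=
  ∃ S : ℕ → Finset V, (∀ i ∈ I, (S i).Nonempty → ConvexRadiusLE G (S i) i) ∧
    ∑ i ∈ I, (S i).val = (D.map Finset.val).sum

theorem Packable.nil (I : Finset ℕ) : Packable G 0 I :=
  ⟨fun _ => ∅, by simp, by simp⟩

theorem Packable.mono {D : Multiset (Finset V)} {I J : Finset ℕ} (h : Packable G D I)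
    (hIJ : I ⊆ J) : Packable G D J := by
  obtain ⟨S, hS, hsum⟩ := h
  refine ⟨fun i => if i ∈ I then S i else ∅, fun i _ hne => ?_, ?_⟩
  · by_cases hi : i ∈ I
    · simp only [hi, if_true] at hne ⊢
      exact hS i hi hne
    · simp [hi] at hne
  · rw [← hsum, ← sum_subset hIJ fun i _ hi => by simp [hi]]
    exact sum_congr rfl fun i hi => by simp [hi]

theorem Packable.cons {A : Finset V} {D : Multiset (Finset V)} {I : Finset ℕ} {i : ℕ}
    (h : Packable G D I) (hA : ConvexRadiusLE G A i) (hi : i ∉ I) :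
    Packable G (A ::ₘ D) (insert i I) := by
  obtain ⟨S, hS, hsum⟩ := h
  have hne : ∀ j ∈ I, j ≠ i := fun j hj hji => hi (hji ▸ hj)
  refine ⟨Function.update S i A, fun j hj => ?_, ?_⟩
  · rcases mem_insert.mp hj with rfl | hj
    · simpa using fun _ => hA
    · rw [Function.update_of_ne (hne j hj)]
      exact hS j hj
  · rw [sum_insert hi, Function.update_self, Multiset.map_cons, Multiset.sum_cons, ← hsum]
    congr 1
    exact sum_congr rfl fun j hj => by rw [Function.update_of_ne (hne j hj)]

theorem Packable.of_split [DecidableEq V] {A S : Finset V} {D : Multiset (Finset V)}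
    {I : Finset ℕ} (hAS : A ⊆ S) (h : Packable G (A ::ₘ (S \ A) ::ₘ D) I) :
    Packable G (S ::ₘ D) I := by
  obtain ⟨P, hP, hsum⟩ := h
  refine ⟨P, hP, ?_⟩
  simp only [hsum, Multiset.map_cons, Multiset.sum_cons, ← add_assoc, sdiff_val]
  rw [add_tsub_cancel_of_le (val_le_iff.mpr hAS)]

theorem Packable.exists_partition [Fintype V] (hG : G.Preconnected) {k : ℕ}
    (h : Packable G {univ} (range k)) :
    ∃ S : Fin k → Set V, (∀ v : V, ∃! i : Fin k, v ∈ S i) ∧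
      ∀ i : Fin k, (S i).Nonempty → (G.induce (S i)).Connected ∧
        ∃ u : S i, ∀ v : S i, (G.induce (S i)).dist u v ≤ i := by
  classical
  obtain ⟨S, hS, hsum⟩ := h
  refine ⟨fun i => S i, fun v => ?_, fun i hi =>
    (hS i (mem_range.mpr i.2) hi).exists_induce_dist_le hG⟩
  have hcount : #{i ∈ range k | v ∈ S i} = 1 := by
    have := congrArg (Multiset.count v) hsum
    simpa only [Multiset.count_sum', Multiset.count_eq_of_nodup (Finset.nodup _), mem_val,
      ← card_filter, Multiset.map_singleton, Multiset.sum_singleton, mem_univ, if_true] using this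
  obtain ⟨a, ha⟩ := card_eq_one.mp hcount
  have hmem (i : ℕ) : i < k ∧ v ∈ S i ↔ i = a := by simpa using Finset.ext_iff.mp ha i
  obtain ⟨hak, hva⟩ := (hmem a).mpr rfl
  exact ⟨⟨a, hak⟩, hva, fun i hi => Fin.ext ((hmem i).mp ⟨i.2, hi⟩)⟩

theorem Packable.cons_top {A : Finset V} {D : Multiset (Finset V)} {lo r : ℕ}
    (h : Packable G D (Ico lo r)) (hA : ConvexRadiusLE G A r) (hlo : lo ≤ r) :
    Packable G (A ::ₘ D) (Ico lo (r + 1)) := by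
  rw [← insert_Ico_right_eq_Ico_add_one hlo]
  exact h.cons hA (by simp)

theorem Packable.cons_pair (hT : T.IsTree) {P : Finset V}
    {D : Multiset (Finset V)} {lo x d : ℕ} (h : Packable T D (Ico (lo + 1) x))
    (hP : ConvexDiamGE T P d) (hlo : lo < x) (hcard : #P ≤ 2 * x + 2 * lo + 2)
    (hcard' : 2 * #P ≤ 4 * x + d + 3) : Packable T (P ::ₘ D) (Ico lo (x + 1)) := by
  classical
  rcases hP.exists_split hT hlo.le hcard hcard' with hx | ⟨A, hAP, hAx, hAlo⟩
  · exact (h.mono (Ico_subset_Ico_left lo.le_succ)).cons_top hx hlo.le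
  · refine Packable.of_split hAP (Packable.cons_top ?_ hAx hlo.le)
    rw [← insert_Ico_add_one_left_eq_Ico hlo]
    exact h.cons hAlo (by simp)

end Packing

section Budget

/-- The total number of vertices of a family of sets. -/
def weight (D : Multiset (Finset V)) : ℕ := (D.map Finset.card).sum

theorem weight_cons (P : Finset V) (D : Multiset (Finset V)) :
    weight (P ::ₘ D) = #P + weight D := by
  simp [weight]

theorem card_mul_le_weight {D : Multiset (Finset V)} {a : ℕ} (h : ∀ P ∈ D, a ≤ #P) :
    D.card * a ≤ weight D := by
  simpa [weight] using Multiset.card_nsmul_le_sum (s := D.map Finset.card) (a := a) (by simpa)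

theorem exists_eq_cons_forall_card_le {D : Multiset (Finset V)} (hD : D ≠ 0) :
    ∃ P D', D = P ::ₘ D' ∧ ∀ Q ∈ D', #Q ≤ #P := by
  obtain ⟨P, hP, hmax⟩ := D.exists_max_image Finset.card hD
  obtain ⟨D', rfl⟩ := Multiset.exists_cons_of_mem hP
  exact ⟨P, D', rfl, fun Q hQ => hmax Q (Multiset.mem_cons_of_mem hQ)⟩

/-- The condition under which `w` vertices are packed into the radii `lo, lo + 1, …, r - 1`. It is
preserved whenever a large enough piece uses up the radius `r - 1`, alone or together with `lo`,
and for `lo = 0` it is the bound `w ≤ (3 * r ^ 2 - 16 * r) / 4` of the theorem. -/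
def Budget (r lo w : ℕ) : Prop := 4 * w + 16 * r + (r + lo) ^ 2 ≤ 4 * r ^ 2

theorem Budget.mono {r lo w w' : ℕ} (h : Budget r lo w) (hw : w' ≤ w) : Budget r lo w' := by
  unfold Budget at *
  omega

theorem Budget.eq_zero {lo w : ℕ} (h : Budget 0 lo w) : w = 0 := by
  unfold Budget at h
  nlinarith

theorem Budget.lo_lt {r lo w : ℕ} (h : Budget (r + 1) lo w) : lo < r := by
  unfold Budget at h
  by_contra! hr
  nlinarith

theorem Budget.pay_top {r lo p w : ℕ} (h : Budget (r + 1) lo (p + w)) (hp : 3 * r < 2 * p) :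
    Budget r lo w := by
  unfold Budget at *
  linarith [lo.zero_le]

theorem Budget.pay_pair {r lo p w : ℕ} (h : Budget (r + 1) lo (p + w)) (hp : 2 * r < p) :
    Budget r (lo + 1) w := by
  unfold Budget at *
  linarith

end Budget

section Light

/-- Convex sets of diameter at least `m` with at most `3 * m / 2` vertices. Being nearly paths, they
are cheap to cover by one or two sets of small radius. -/
def IsLight (G : SimpleGraph V) (m : ℕ) (P : Finset V) : Prop :=
  ConvexDiamGE G P m ∧ 2 * #P ≤ 3 * m

theorem ConvexDiamGE.mono {S : Set V} {d d' : ℕ} (h : ConvexDiamGE G S d) (hd : d' ≤ d) :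
    ConvexDiamGE G S d' := by
  obtain ⟨hconv, u, hu, v, hv, huv⟩ := h
  exact ⟨hconv, u, hu, v, hv, hd.trans huv⟩

theorem ConvexDiamGE.convexRadiusLE (hT : T.IsTree) {S : Finset V} {d r : ℕ}
    (hS : ConvexDiamGE T S d) (hr : #S ≤ 2 * r + 1) : ConvexRadiusLE T S r :=
  have ⟨hconv, u, hu, _⟩ := hS
  convexRadiusLE_of_card_le hT hconv ⟨u, hu⟩ hr

/-- When `N` light sets are packed into the radii `lo, …, m - 1`, this many of the largest ones
receive a single radius and the others a pair. The second argument of `max` is the number for which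
exactly the radii `lo, …, m - 1` are used up; light sets fit into all radii from `3 * m / 4` on,
which explains the first one. -/
def singleCount (m lo N : ℕ) : ℕ := max (m / 4) (2 * N + lo - m)

section Arithmetic

variable {m lo W i j w : ℕ}

theorem four_mul_add_le_of_budget {N : ℕ} (hbud : Budget (m + 1) lo (W + 1))
    (hN : N * (m + 1) ≤ W) : 4 * N + 2 * lo ≤ 3 * m := by
  have := hbud.lo_lt
  unfold Budget at hbud
  by_contra!
  nlinarith

theorem add_le_of_budget {N : ℕ} (hbud : Budget (m + 1) lo (W + 1)) (hN : N * (m + 1) ≤ W) :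
    N + lo ≤ m := by
  have := hbud.lo_lt
  unfold Budget at hbud
  by_contra!
  nlinarith

theorem add_one_add_mul_le (hmw : m < w) (hW : (i + 1) * w + j * (m + 1) ≤ W) :
    (i + 1 + j) * (m + 1) ≤ W := by
  nlinarith

theorem card_le_of_lt_singleCount (hbud : Budget (m + 1) lo (W + 1)) (hmw : m < w)
    (hlight : 2 * w ≤ 3 * m) (hW : (i + 1) * w + j * (m + 1) ≤ W)
    (hi : i < singleCount m lo (i + 1 + j)) : w + 2 * i + 1 ≤ 2 * m := by
  have := four_mul_add_le_of_budget hbud (add_one_add_mul_le hmw hW)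
  unfold Budget at hbud
  unfold singleCount at hi
  by_contra! hw
  zify at *
  have : (0 : ℤ) ≤ (4 * i - m) * (m - 2 * i) := mul_nonneg (by omega) (by omega)
  have : (0 : ℤ) ≤ (i + 1) * (w + 2 * i - 2 * m) := mul_nonneg (by omega) (by omega)
  have : (0 : ℤ) ≤ (2 * j - (m - i - lo - 1)) * (m + 1) := mul_nonneg (by omega) (by omega)
  nlinarith

theorem card_add_le_of_singleCount_le (hbud : Budget (m + 1) lo (W + 1)) (hmw : m < w)
    (hlight : 2 * w ≤ 3 * m) (hW : (i + 1) * w + j * (m + 1) ≤ W)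
    (hi : singleCount m lo (i + 1 + j) ≤ i) :
    w + 2 * singleCount m lo (i + 1 + j) ≤ 2 * m + 2 * lo := by
  have hN := four_mul_add_le_of_budget hbud (add_one_add_mul_le hmw hW)
  obtain ⟨c, hc⟩ : ∃ c, singleCount m lo (i + 1 + j) = c := ⟨_, rfl⟩
  rw [hc] at hi ⊢
  unfold Budget at hbud
  unfold singleCount at hc
  by_contra! hw
  have hcN : c + m = 2 * (i + 1 + j) + lo := by omega
  zify at *
  have : (0 : ℤ) ≤ (4 * c - m) * (m - 2 * c) := mul_nonneg (by omega) (by omega)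
  have : (0 : ℤ) ≤ (i - c) * (w - (m + 1)) := mul_nonneg (by omega) (by omega)
  have : (0 : ℤ) ≤ (c + 1) * (w + 2 * c - 2 * m - 2 * lo - 1) :=
    mul_nonneg (by omega) (by omega)
  have : (0 : ℤ) ≤ c * lo := by positivity
  nlinarith

theorem two_mul_card_add_le (hbud : Budget (m + 1) lo (W + 1)) (hmw : m < w)
    (hlight : 2 * w ≤ 3 * m) (hW : (i + 1) * w + j * (m + 1) ≤ W) :
    2 * w + 4 * i < 5 * m := by
  have := four_mul_add_le_of_budget hbud (add_one_add_mul_le hmw hW)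
  unfold Budget at hbud
  by_contra! hw
  zify at *
  have : (0 : ℤ) ≤ (2 * i - m) * (3 * m - 4 * i) := mul_nonneg (by omega) (by omega)
  have : (0 : ℤ) ≤ (i + 1) * (2 * w + 4 * i - 5 * m) := mul_nonneg (by omega) (by omega)
  have : (0 : ℤ) ≤ j * (m + 1) := by positivity
  have : (0 : ℤ) ≤ m * lo := by positivity
  nlinarith

end Arithmetic

/-- The greedy packing after `i` light sets, at least as large as the sets in `D`, have been packed
out of a total of weight `W`. -/
theorem packable_of_forall_mul_card_add_weight_le (hT : T.IsTree) {m lo W N : ℕ}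
    (hbud : Budget (m + 1) lo (W + 1)) {i : ℕ} {D : Multiset (Finset V)} (hN : i + D.card = N)
    (hD : ∀ P ∈ D, IsLight T m P) (hW : ∀ P ∈ D, i * #P + weight D ≤ W) :
    Packable T D (Ico (lo + (i - singleCount m lo N)) (m - i)) := by
  induction hj : D.card generalizing i D with
  | zero => exact Multiset.card_eq_zero.mp hj ▸ Packable.nil _
  | succ j ih =>
    obtain ⟨P, D, rfl, hmax⟩ :=
      exists_eq_cons_forall_card_le (Multiset.card_pos.mp (j.succ_pos.trans_eq hj.symm))
    rw [Multiset.card_cons] at hN hj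
    simp only [Multiset.forall_mem_cons, weight_cons] at hD hW
    obtain ⟨⟨hdiam, hlight⟩, hD⟩ := hD
    have hmP := hdiam.lt_card hT
    have hrest := ih (i := i + 1) (by omega) hD
      (fun Q hQ => by nlinarith [hW.2 Q hQ, hmax Q hQ]) (by omega)
    have hweight := card_mul_le_weight fun Q hQ => (hD Q hQ).1.lt_card hT
    obtain rfl : N = i + 1 + j := by omega
    have hPW : (i + 1) * #P + j * (m + 1) ≤ W := by
      rw [show D.card = j by omega] at hweight
      linarith [hW.1]
    have hNm := add_le_of_budget hbud (add_one_add_mul_le hmP hPW)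
    have hN3 := four_mul_add_le_of_budget hbud (add_one_add_mul_le hmP hPW)
    rw [show m - i = m - (i + 1) + 1 by omega]
    rcases lt_or_ge i (singleCount m lo (i + 1 + j)) with hi | hi
    · have := card_le_of_lt_singleCount hbud hmP hlight hPW hi
      rw [Nat.sub_eq_zero_of_le hi] at hrest
      rw [Nat.sub_eq_zero_of_le hi.le]
      exact hrest.cons_top (hdiam.convexRadiusLE hT (by omega)) (by omega)
    · have := card_add_le_of_singleCount_le hbud hmP hlight hPW hi
      have := two_mul_card_add_le hbud hmP hlight hPW
      rw [Nat.sub_add_comm hi, ← add_assoc] at hrest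
      refine hrest.cons_pair hT hdiam ?_ (by omega) (by omega)
      unfold singleCount at hi ⊢
      omega

theorem packable_of_isLight (hT : T.IsTree) {m lo : ℕ} {D : Multiset (Finset V)}
    (hbud : Budget (m + 1) lo (weight D + 1)) (hD : ∀ P ∈ D, IsLight T m P) :
    Packable T D (Ico lo m) := by
  simpa using packable_of_forall_mul_card_add_weight_le hT hbud (zero_add _) hD (by simp)

end Light

section Main

/-- The packing statement for one arbitrary subtree `B` together with light sets put aside for the
radius `m`. The theorem is the case where `B` is the whole tree and no set has been put aside. -/
def PackableWithLight (G : SimpleGraph V) (m : ℕ) : Prop :=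
  ∀ ⦃lo : ℕ⦄ ⦃B : Finset V⦄ ⦃D : Multiset (Finset V)⦄, B.Nonempty → GeodConvex G B →
    (∀ P ∈ D, IsLight G m P) → Budget (m + 1) lo (#B + weight D) →
    Packable G (B ::ₘ D) (Ico lo (m + 1))

theorem two_mul_le_four_mul_add_of_mul_le {m r s w : ℕ} (hrs : r + s = m) (hmw : m < w)
    (hlight : 2 * w ≤ 3 * m) (hpaid : 4 * (s * w) + 16 * (m + 1) ≤ 3 * (m + 1) ^ 2) :
    2 * w ≤ 4 * r + m + 3 := by
  subst hrs
  by_contra! hw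
  rcases le_or_gt s (3 * (r + 1)) with hs | hs
  · zify at *
    have : (0 : ℤ) ≤ (3 * (r + 1) - s) * (s - (r + 1)) := mul_nonneg (by omega) (by omega)
    have : (0 : ℤ) ≤ s * (2 * w - (4 * r + (r + s) + 4)) := mul_nonneg (by omega) (by omega)
    nlinarith
  · nlinarith

/-- `m` is the radius for which the sets in `D` were put aside. Since then `s` sets, none of them
smaller than the sets in `D`, have received radii from `r` on, and `hpaid` bounds the weight of `D`
together with theirs. -/
theorem packable_cons_of_queue (hT : T.IsTree) {m : ℕ} (hlower : ∀ r < m, PackableWithLight T r)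
    {r s lo : ℕ} {B : Finset V} {D : Multiset (Finset V)} (hrs : r + s = m + 1) (hr : r ≤ m)
    (hne : B.Nonempty) (hB : GeodConvex T B) (hD : ∀ P ∈ D, IsLight T m P)
    (hcard : ∀ P ∈ D, #P ≤ 2 * (r + lo))
    (hpaid : ∀ P ∈ D, 4 * (s * #P + weight D) + 16 * (m + 1) ≤ 3 * (m + 1) ^ 2)
    (hbud : Budget r lo (#B + weight D)) : Packable T (B ::ₘ D) (Ico lo r) := by
  induction r generalizing s lo D with
  | zero =>
    have := hbud.eq_zero
    have := hne.card_pos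
    omega
  | succ r ih =>
    by_cases hlight : ∀ P ∈ D, 2 * #P ≤ 3 * r
    · exact hlower r hr hne hB (fun P hP => ⟨(hD P hP).1.mono (by omega), hlight P hP⟩) hbud
    push Not at hlight
    obtain ⟨Q, hQ, hheavy⟩ := hlight
    obtain ⟨P, D, rfl, hmax⟩ :=
      exists_eq_cons_forall_card_le (ne_of_mem_of_not_mem' hQ (Multiset.notMem_zero Q))
    have hQP : #Q ≤ #P := by
      rcases Multiset.mem_cons.mp hQ with rfl | hQ
      exacts [le_rfl, hmax Q hQ]
    simp only [Multiset.forall_mem_cons, weight_cons] at hD hcard hpaid hbud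
    obtain ⟨⟨hdiam, hlight⟩, hD⟩ := hD
    have hlo := hbud.lo_lt
    have hpaid' : ∀ Q ∈ D, 4 * ((s + 1) * #Q + weight D) + 16 * (m + 1) ≤ 3 * (m + 1) ^ 2 :=
      fun Q hQ => by nlinarith [hpaid.2 Q hQ, hmax Q hQ]
    rw [add_left_comm] at hbud
    rw [Multiset.cons_swap]
    rcases le_or_gt #P (2 * r) with hP | hP
    · have hcard' : ∀ Q ∈ D, #Q ≤ 2 * (r + lo) := fun Q hQ => by linarith [hmax Q hQ]
      exact (ih (by omega) (by omega) hD hcard' hpaid' (hbud.pay_top (by omega))).cons_top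
        (hdiam.convexRadiusLE hT (by omega)) hlo.le
    · have hcard' : ∀ Q ∈ D, #Q ≤ 2 * (r + (lo + 1)) := fun Q hQ => by linarith [hcard.2 Q hQ]
      refine (ih (by omega) (by omega) hD hcard' hpaid' (hbud.pay_pair hP)).cons_pair
        hT hdiam hlo (by omega) ?_
      exact two_mul_le_four_mul_add_of_mul_le (s := s) (by omega) (hdiam.lt_card hT) hlight
        (by linarith [hpaid.1])

theorem packableWithLight_of_forall_lt (hT : T.IsTree) {m : ℕ}
    (hlower : ∀ r < m, PackableWithLight T r) : PackableWithLight T m := by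
  classical
  intro lo B
  induction B using Finset.strongInduction with
  | H B ih =>
  intro D hne hB hD hbud
  have hlo := hbud.lo_lt
  have hBpos := hne.card_pos
  rcases hB.convexRadiusLE_or_exists_prune hT hne m with
    hrad | ⟨A, hAB, hAr, hAd, hconv, hne'⟩
  · exact (packable_of_isLight hT (hbud.mono (by omega)) hD).cons_top hrad hlo.le
  refine Packable.of_split hAB ?_
  have hcard := card_sdiff_add_card_eq_card hAB
  have hApos := hAd.lt_card hT
  rcases le_or_gt (2 * #A) (3 * m) with hlight | hheavy
  · rw [Multiset.cons_swap]
    refine ih _ (sdiff_ssubset hAB (card_pos.mp (by omega))) hne' hconv ?_ ?_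
    · exact Multiset.forall_mem_cons.mpr ⟨⟨hAd, hlight⟩, hD⟩
    · rwa [weight_cons, ← add_assoc, hcard]
  · have hbud' : Budget m lo (#(B \ A) + weight D) :=
      Budget.pay_top (p := #A) (by rwa [← add_assoc, add_comm #A, hcard]) hheavy
    refine (packable_cons_of_queue hT hlower rfl le_rfl hne' hconv hD (fun P hP => ?_)
      (fun P hP => ?_) hbud').cons_top hAr hlo.le
    · have := (hD P hP).2
      omega
    · have := (hD P hP).2
      unfold Budget at hbud
      nlinarith

theorem packableWithLight (hT : T.IsTree) (m : ℕ) : PackableWithLight T m := by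
  induction m using Nat.strong_induction_on with
  | _ m ih => exact packableWithLight_of_forall_lt hT ih

theorem budget_zero_of_cast_le {n k : ℕ}
    (h : (n : ℝ) ≤ (3 * (k : ℝ) ^ 2 - 16 * (k : ℝ)) / 4) : Budget k 0 n := by
  have : 4 * (n : ℝ) + 16 * k + (k + 0) ^ 2 ≤ 4 * (k : ℝ) ^ 2 := by linarith
  exact_mod_cast this

end Main

end TreePartition

/-- **Theorem (Bonato–Kamali, partition form).** Let `T` be a finite tree of order `n`
and let `k` be a positive integer with `n ≤ (3k² - 16k)/4`. Then the vertex set of `T`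
can be partitioned into `k` (possibly empty) sets `S 0, S 1, …, S (k-1)` (each vertex
lies in exactly one of them) such that for each `i`, if `S i` is nonempty then it
induces a connected subgraph (hence a subtree) of `T` whose radius is at most `i`
(witnessed by a center `u` within induced distance `i` of every vertex of `S i`). -/
theorem tree_partition_into_bounded_radius_subtrees {V : Type*} [Fintype V]
    (T : SimpleGraph V) (hT : T.IsTree) (n : ℕ) (hn : n = Fintype.card V)
    (k : ℕ) (hk : 0 < k) (hnk : (n : ℝ) ≤ (3 * (k : ℝ) ^ 2 - 16 * (k : ℝ)) / 4) :
    ∃ S : Fin k → Set V,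
      (∀ v : V, ∃! i : Fin k, v ∈ S i) ∧
      ∀ i : Fin k, (S i).Nonempty →
        (T.induce (S i)).Connected ∧
        ∃ u : ↥(S i), ∀ v : ↥(S i), (T.induce (S i)).dist u v ≤ (i : ℕ) := by
  subst hn
  obtain ⟨m, rfl⟩ := Nat.exists_eq_add_one_of_ne_zero hk.ne'
  have := hT.connected.nonempty
  refine TreePartition.Packable.exists_partition hT.connected.preconnected ?_
  rw [Finset.range_eq_Ico]
  refine TreePartition.packableWithLight hT m Finset.univ_nonempty ?_ (by simp) ?_
  · rw [Finset.coe_univ]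
    exact TreePartition.geodConvex_univ
  · exact TreePartition.budget_zero_of_cast_le hnk
end

section
/- If G is a finite connected simple graph of order n ≥ 1, then the burning number of G satisfies b(G) ≤ ⌈(√(8n + 1) + 1)/2⌉. -/
/-!
Root a breadth-first spanning tree. Either the ball of radius `k` at the root covers the tree, or
a deepest vertex `a` has a `k`-th ancestor `u` other than the root. By maximality of the depth of
`a`, the ball of radius `k` at `u` covers the whole subtree below `u`, which contains the `k + 1`
vertices on the path from `a` to `u`. Removing that subtree leaves a rooted tree, so by induction
`1 + 2 + ⋯ + (k + 1)` vertices can be covered by balls of radii `0, 1, …, k`.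
-/

open Finset

/-- `p` is the parent function of a tree on `α` with root `r` and depth function `depth`. The
subtraction is truncated, so that the root is its own parent. -/
structure IsRootedTree {α : Type*} (p : α → α) (depth : α → ℕ) (r : α) : Prop where
  depth_parent : ∀ a, depth (p a) = depth a - 1
  eq_root_of_depth_eq_zero : ∀ a, depth a = 0 → a = r

/-- `u` is an ancestor of `a`, possibly `a` itself, for the parent function `p`. -/
def IsAncestor {α : Type*} (p : α → α) (u a : α) : Prop :=
  ∃ j, p^[j] a = u

section RootedTree

variable {α : Type*} {p : α → α} {depth : α → ℕ} {r : α} {S : Finset α} {k : ℕ}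

theorem IsAncestor.of_parent {u a : α} (h : IsAncestor p u (p a)) : IsAncestor p u a :=
  let ⟨j, hj⟩ := h
  ⟨j + 1, hj⟩

open Classical in
theorem mapsTo_filter_not_isAncestor (hS : Set.MapsTo p S S) (u : α) :
    Set.MapsTo p (S.filter (¬ IsAncestor p u ·)) (S.filter (¬ IsAncestor p u ·)) := by
  intro w hw
  obtain ⟨hwS, hwu⟩ := mem_filter.1 hw
  exact mem_filter.2 ⟨hS hwS, fun h ↦ hwu h.of_parent⟩

namespace IsRootedTree

theorem depth_iterate (h : IsRootedTree p depth r) (j : ℕ) (a : α) :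
    depth (p^[j] a) = depth a - j := by
  induction j with
  | zero => rfl
  | succ j ih => rw [Function.iterate_succ_apply', h.depth_parent, ih, Nat.sub_sub]

theorem iterate_depth (h : IsRootedTree p depth r) (a : α) : p^[depth a] a = r :=
  h.eq_root_of_depth_eq_zero _ (by rw [h.depth_iterate, Nat.sub_self])

theorem injOn_iterate (h : IsRootedTree p depth r) (a : α) :
    Set.InjOn (fun j ↦ p^[j] a) (Set.Iic (depth a)) := by
  intro i hi j hj hij
  have hdepth : depth a - i = depth a - j := by
    simpa only [h.depth_iterate] using congrArg depth hij
  exact (tsub_right_inj hi hj).1 hdepth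

open Classical in
theorem succ_le_card_filter_isAncestor (h : IsRootedTree p depth r) (hS : Set.MapsTo p S S)
    {a : α} (ha : a ∈ S) (hk : k ≤ depth a) : k + 1 ≤ #{w ∈ S | IsAncestor p (p^[k] a) w} := by
  rw [← card_range (k + 1)]
  refine card_le_card_of_injOn (fun j ↦ p^[j] a) (fun j hj ↦ ?_)
    ((h.injOn_iterate a).mono fun j hj ↦ ?_)
  · have hjk : j ≤ k := Nat.lt_succ_iff.1 (mem_range.1 hj)
    refine mem_filter.2 ⟨hS.iterate j ha, k - j, ?_⟩
    rw [← Function.iterate_add_apply, Nat.sub_add_cancel hjk]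
  · exact (Nat.lt_succ_iff.1 (mem_range.1 hj)).trans hk

theorem le_of_iterate_eq_iterate (h : IsRootedTree p depth r) {a w : α} {j : ℕ}
    (hk : k < depth a) (hw : depth w ≤ depth a) (hj : p^[j] w = p^[k] a) : j ≤ k := by
  have hdepth : depth w - j = depth a - k := by
    simpa only [h.depth_iterate] using congrArg depth hj
  omega

/-- The ball of radius `i` centred at `x i` is only needed to cover descendants of `x i`. -/
theorem exists_cover_of_two_mul_card_le (h : IsRootedTree p depth r) (hS : Set.MapsTo p S S)
    (hcard : 2 * #S ≤ k * (k + 1)) :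
    ∃ x : Fin k → α, ∀ a ∈ S, ∃ i : Fin k, ∃ j ≤ (i : ℕ), p^[j] a = x i := by
  classical
  induction k generalizing S with
  | zero =>
    have hempty : S = ∅ := by simpa using hcard
    exact ⟨Fin.elim0, by simp [hempty]⟩
  | succ k ih =>
    by_cases hshallow : ∀ a ∈ S, depth a ≤ k
    · exact ⟨fun _ ↦ r, fun a ha ↦ ⟨Fin.last k, depth a, hshallow a ha, h.iterate_depth a⟩⟩
    push Not at hshallow
    obtain ⟨b, hbS, hb⟩ := hshallow
    obtain ⟨a, haS, hmax⟩ := exists_max_image S depth ⟨b, hbS⟩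
    have hka : k < depth a := hb.trans_le (hmax b hbS)
    set u := p^[k] a
    have hsubtree : k + 1 ≤ #{w ∈ S | IsAncestor p u w} :=
      h.succ_le_card_filter_isAncestor hS haS hka.le
    have hsplit := card_filter_add_card_filter_not (s := S) (IsAncestor p u)
    have hrest : 2 * #{w ∈ S | ¬ IsAncestor p u w} ≤ k * (k + 1) := by nlinarith
    obtain ⟨x, hx⟩ := ih (mapsTo_filter_not_isAncestor hS u) hrest
    refine ⟨Fin.snoc x u, fun w hw ↦ ?_⟩
    by_cases hwu : IsAncestor p u w
    · obtain ⟨j, hj⟩ := hwu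
      exact ⟨Fin.last k, j, h.le_of_iterate_eq_iterate hka (hmax w hw) hj, by simpa using hj⟩
    · obtain ⟨i, j, hji, hj⟩ := hx w (mem_filter.2 ⟨hw, hwu⟩)
      exact ⟨i.castSucc, j, hji, by simpa using hj⟩

end IsRootedTree

end RootedTree

section Graph

variable {V : Type*} {G : SimpleGraph V}

theorem exists_adj_dist_add_one_eq {r v : V} (h : G.Reachable v r) (hv : v ≠ r) :
    ∃ w, G.Adj w v ∧ G.dist r w + 1 = G.dist r v := by
  obtain ⟨q, hq⟩ := h.exists_walk_length_eq_dist
  cases q with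
  | nil => exact absurd rfl hv
  | @cons _ w _ hvw q =>
    refine ⟨w, hvw.symm, ?_⟩
    have hupper : G.dist w r ≤ q.length := SimpleGraph.dist_le q
    have hlower : G.dist v r ≤ G.dist v w + G.dist w r :=
      hvw.reachable.dist_triangle_left r
    rw [SimpleGraph.dist_eq_one_iff_adj.2 hvw] at hlower
    rw [SimpleGraph.Walk.length_cons] at hq
    rw [SimpleGraph.dist_comm, G.dist_comm (u := r)]
    omega

theorem exists_isRootedTree_dist (hG : G.Connected) (r : V) :
    ∃ p : V → V, IsRootedTree p (G.dist r) r ∧ ∀ v, G.dist (p v) v ≤ 1 := by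
  have hparent : ∀ v, ∃ w, G.dist r w = G.dist r v - 1 ∧ G.dist w v ≤ 1 := by
    intro v
    rcases eq_or_ne v r with rfl | hv
    · exact ⟨v, by simp⟩
    · obtain ⟨w, hadj, hw⟩ := exists_adj_dist_add_one_eq (hG v r) hv
      exact ⟨w, Nat.eq_sub_of_add_eq hw, (SimpleGraph.dist_eq_one_iff_adj.2 hadj).le⟩
  choose p hdepth hdist using hparent
  exact ⟨p, ⟨hdepth, fun v hv ↦ (hG.dist_eq_zero_iff.1 hv).symm⟩, hdist⟩

theorem dist_iterate_le (hG : G.Connected) {p : V → V} (hp : ∀ v, G.dist (p v) v ≤ 1) (j : ℕ)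
    (v : V) : G.dist (p^[j] v) v ≤ j := by
  induction j with
  | zero => simp
  | succ j ih =>
    rw [Function.iterate_succ_apply']
    calc G.dist (p (p^[j] v)) v
        ≤ G.dist (p (p^[j] v)) (p^[j] v) + G.dist (p^[j] v) v := hG.dist_triangle
      _ ≤ 1 + j := add_le_add (hp _) ih
      _ = j + 1 := add_comm 1 j

variable [Fintype V] {k : ℕ}

theorem burningNumber_le_of_forall_exists_dist_le [Nonempty V] (x : Fin k → V)
    (hx : ∀ v, ∃ i, G.dist (x i) v ≤ i) : burningNumber G ≤ k := by
  obtain ⟨i₀, -⟩ := hx (Classical.arbitrary V)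
  refine Nat.sInf_le ⟨i₀.pos, x ∘ Fin.rev, fun v ↦ ?_⟩
  obtain ⟨i, hi⟩ := hx v
  refine ⟨i.rev, ?_⟩
  have hradius : k - 1 - (i.rev : ℕ) = i := by
    rw [Fin.val_rev]
    omega
  rwa [hradius, Function.comp_apply, Fin.rev_rev]

theorem burningNumber_le_of_two_mul_card_le (hG : G.Connected)
    (hk : 2 * Fintype.card V ≤ k * (k + 1)) : burningNumber G ≤ k := by
  have : Nonempty V := hG.nonempty
  obtain ⟨p, htree, hp⟩ := exists_isRootedTree_dist hG (Classical.arbitrary V)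
  obtain ⟨x, hx⟩ := htree.exists_cover_of_two_mul_card_le (S := univ) (by simp) hk
  refine burningNumber_le_of_forall_exists_dist_le x fun v ↦ ?_
  obtain ⟨i, j, hji, hj⟩ := hx v (mem_univ v)
  exact ⟨i, hj ▸ (dist_iterate_le hG hp j v).trans hji⟩

end Graph

theorem two_mul_le_mul_succ_of_sqrt_le {n k : ℕ} (h : (√(8 * (n : ℝ) + 1) - 1) / 2 ≤ k) :
    2 * n ≤ k * (k + 1) := by
  have hsqrt : √(8 * (n : ℝ) + 1) ≤ 2 * k + 1 := by linarith
  have hsq : 8 * (n : ℝ) + 1 ≤ (2 * k + 1) ^ 2 := (Real.sqrt_le_left (by positivity)).1 hsqrt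
  have hcast : (2 * n : ℝ) ≤ k * (k + 1) := by linarith
  exact_mod_cast hcast

theorem burningNumber_connected_le_sqrt_two_n_general {V : Type*} [Fintype V]
    {G : SimpleGraph V} (hG : G.Connected) :
    burningNumber G ≤ ⌈(√(8 * (Fintype.card V : ℝ) + 1) - 1) / 2⌉₊ :=
  burningNumber_le_of_two_mul_card_le hG (two_mul_le_mul_succ_of_sqrt_le (Nat.le_ceil _))

/-- **Theorem (Bonato–Kamali).** If `G` is a connected graph of order `n ≥ 1`, then
`b(G) ≤ ⌈(√(8n + 1) + 1)/2⌉`. -/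
theorem burningNumber_connected_le_sqrt_two_n {V : Type*} [Fintype V] (T : SimpleGraph V)
    (hT : T.Connected) (n : ℕ) (hn : n = Fintype.card V) (hn1 : 1 ≤ n) :
    burningNumber T ≤ ⌈(Real.sqrt (8 * (n : ℝ) + 1) + 1) / 2⌉₊ := by
  subst hn
  exact (burningNumber_connected_le_sqrt_two_n_general hT).trans (Nat.ceil_mono (by linarith))
end
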